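/- (Fefferman–Stein vector-valued maximal inequality on mixed-norm Herz spaces.) Let n ∈ ℕ, p⃗, q⃗ = (q_1,…,q_n) ∈ (1,∞)^n, α⃗ = (α_1,…,α_n) ∈ ℝⁿ with α_i ∈ (-1/q_i, 1 - 1/q_i) for every i ∈ {1,…,n}, and u ∈ (1,∞). Then there exists a positive constant C such that for every sequence {f_j}_{j∈ℤ} of measurable functions on ℝⁿ, ‖(Σ_{j∈ℤ} [M(f_j)]^u)^{1/u}‖_{Ė^{α⃗,p⃗}_{q⃗}(ℝⁿ)} ≤ C ‖(Σ_{j∈ℤ} |f_j|^u)^{1/u}‖_{Ė^{α⃗,p⃗}_{q⃗}(ℝⁿ)}, where M is the centered Hardy–Littlewood maximal operator. -/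

import Mathlib

open MeasureTheory ENNReal Filter

noncomputable section

/-- The dyadic annulus `R_k = (-2^k, 2^k) \ (-2^(k-1), 2^(k-1))` in `ℝ`. -/
def herzRing (k : ℤ) : Set ℝ :=
  Set.Ioo (-(2 : ℝ) ^ k) ((2 : ℝ) ^ k) \ Set.Ioo (-(2 : ℝ) ^ (k - 1)) ((2 : ℝ) ^ (k - 1))

/-- The `L^q` "norm" (valued in `ℝ≥0∞`) of an `ℝ≥0∞`-valued function on a set `s ⊆ ℝ`,
with the usual modification when `q = ∞`. -/
def lqNormOn (q : ℝ≥0∞) (s : Set ℝ) (g : ℝ → ℝ≥0∞) : ℝ≥0∞ :=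
  if q = ∞ then essSup (s.indicator g) volume
  else (∫⁻ x in s, g x ^ q.toReal) ^ (1 / q.toReal)

/-- The `l^p` norm over `ℤ` of an `ℝ≥0∞`-valued sequence, with the usual modification
when `p = ∞`. -/
def lpZNorm (p : ℝ≥0∞) (a : ℤ → ℝ≥0∞) : ℝ≥0∞ :=
  if p = ∞ then ⨆ k, a k
  else (∑' k : ℤ, a k ^ p.toReal) ^ (1 / p.toReal)

/-- The one-dimensional Herz norm `K^{α,p}_q` of an `ℝ≥0∞`-valued function on `ℝ`. -/
def herzNorm1 (α : ℝ) (p q : ℝ≥0∞) (g : ℝ → ℝ≥0∞) : ℝ≥0∞ :=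
  lpZNorm p fun k => ENNReal.ofReal ((2 : ℝ) ^ ((k : ℝ) * α)) * lqNormOn q (herzRing k) g

/-- The mixed-norm Herz norm on `ℝⁿ` of an `ℝ≥0∞`-valued function: the Herz norm
`K^{α_1,p_1}_{q_1}` is applied in the first variable, then `K^{α_2,p_2}_{q_2}` in the
second variable, …, and finally `K^{α_n,p_n}_{q_n}` in the last variable. -/
def mixedHerzNormE : (n : ℕ) → (Fin n → ℝ) → (Fin n → ℝ≥0∞) → (Fin n → ℝ≥0∞) →
    ((Fin n → ℝ) → ℝ≥0∞) → ℝ≥0∞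
  | 0, _, _, _, f => f fun i => i.elim0
  | n + 1, α, p, q, f =>
    herzNorm1 (α (Fin.last n)) (p (Fin.last n)) (q (Fin.last n)) fun xlast =>
      mixedHerzNormE n (Fin.init α) (Fin.init p) (Fin.init q) fun y => f (Fin.snoc y xlast)

/-- The mixed-norm Herz norm `‖f‖_{Ė^{α,p}_q(ℝⁿ)}` of a complex-valued function on `ℝⁿ`. -/
def herzNormC (n : ℕ) (α : Fin n → ℝ) (p q : Fin n → ℝ≥0∞) (f : (Fin n → ℝ) → ℂ) : ℝ≥0∞ :=
  mixedHerzNormE n α p q fun x => (‖f x‖₊ : ℝ≥0∞)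

/-- `I_m = (-2^m, -2^{-m}] ∪ [2^{-m}, 2^m)`. -/
def herzI (m : ℕ) : Set ℝ :=
  Set.Ioc (-(2 : ℝ) ^ (m : ℤ)) (-(2 : ℝ) ^ (-(m : ℤ))) ∪
    Set.Ico ((2 : ℝ) ^ (-(m : ℤ))) ((2 : ℝ) ^ (m : ℤ))

/-- `A_m = I_m^n ⊆ ℝⁿ`. -/
def herzA (n m : ℕ) : Set (Fin n → ℝ) := Set.univ.pi fun _ => herzI m

/-- The class `H(ℝⁿ)` of simple functions built from finitely many pairwise disjoint
parallelepipeds contained in some `A_m`. -/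
def IsHSimple (n : ℕ) (f : (Fin n → ℝ) → ℂ) : Prop :=
  ∃ (m N : ℕ) (a : Fin N → ℂ) (E : Fin N → Fin n → Set ℝ),
    (∀ k i, MeasurableSet (E k i)) ∧
    (∀ k, Set.univ.pi (E k) ⊆ herzA n m) ∧
    (Pairwise fun k l => Disjoint (Set.univ.pi (E k)) (Set.univ.pi (E l))) ∧
    f = fun x => ∑ k, (Set.univ.pi (E k)).indicator (fun _ => a k) x

/-- The Euclidean ball `B(x,r)` in `ℝⁿ`. -/
def eucBall (n : ℕ) (x : Fin n → ℝ) (r : ℝ) : Set (Fin n → ℝ) :=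
  {y | ∑ i, (y i - x i) ^ 2 < r ^ 2}

/-- The (uncentered) maximal operator in the `k`-th variable. -/
def maxVar (n : ℕ) (k : Fin n) (g : (Fin n → ℝ) → ℝ≥0∞) : (Fin n → ℝ) → ℝ≥0∞ :=
  fun x => ⨆ (a : ℝ) (b : ℝ) (_ : x k ∈ Set.Ioo a b),
    (volume (Set.Ioo a b))⁻¹ * ∫⁻ y in Set.Ioo a b, g (Function.update x k y)

/-- The centered Hardy–Littlewood maximal operator on `ℝⁿ`. -/
def centeredMax (n : ℕ) (g : (Fin n → ℝ) → ℝ≥0∞) : (Fin n → ℝ) → ℝ≥0∞ :=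
  fun x => ⨆ (r : ℝ) (_ : 0 < r),
    (volume (eucBall n x r))⁻¹ * ∫⁻ y in eucBall n x r, g y

/-- The composition `M_n ∘ ⋯ ∘ M_1` of the maximal operators in each variable. -/
def iteratedMax (n : ℕ) (g : (Fin n → ℝ) → ℝ≥0∞) : (Fin n → ℝ) → ℝ≥0∞ :=
  (List.ofFn fun k : Fin n => maxVar n k).foldl (fun h F => F h) g

/-- The iterated maximal operator `ℳ_t(f) = [M_n ⋯ M_1(|f|^t)]^{1/t}`. -/
def iterMaxPow (n : ℕ) (t : ℝ) (f : (Fin n → ℝ) → ℂ) : (Fin n → ℝ) → ℝ≥0∞ :=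
  fun x => iteratedMax n (fun y => (‖f y‖₊ : ℝ≥0∞) ^ t) x ^ (1 / t)

/-- The `l^r`-Herz type mixed norm of a sequence of functions on `ℝⁿ`. -/
def herzSeqNorm (n : ℕ) (r : ℝ≥0∞) (α : Fin n → ℝ) (p q : Fin n → ℝ≥0∞)
    (F : ℤ → (Fin n → ℝ) → ℂ) : ℝ≥0∞ :=
  mixedHerzNormE n α p q fun x => lpZNorm r fun j => (‖F j x‖₊ : ℝ≥0∞)

/-- `N` is a ball quasi-Banach function norm on (nonnegative extended-real-valued)
measurable functions on `ℝⁿ`. -/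
def IsBQBFNorm (n : ℕ) (N : ((Fin n → ℝ) → ℝ≥0∞) → ℝ≥0∞) : Prop :=
  (∀ f : (Fin n → ℝ) → ℝ≥0∞, Measurable f → N f = 0 → f =ᵐ[volume] 0) ∧
  (∀ f g : (Fin n → ℝ) → ℝ≥0∞, Measurable f → Measurable g →
    (∀ᵐ x ∂volume, g x ≤ f x) → N g ≤ N f) ∧
  (∀ (fm : ℕ → (Fin n → ℝ) → ℝ≥0∞) (f : (Fin n → ℝ) → ℝ≥0∞),
    (∀ m, Measurable (fm m)) → Measurable f →
    (∀ᵐ x ∂volume, Monotone (fun m => fm m x) ∧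
      Tendsto (fun m => fm m x) atTop (nhds (f x))) →
    Monotone (fun m => N (fm m)) ∧ Tendsto (fun m => N (fm m)) atTop (nhds (N f))) ∧
  (∀ (x : Fin n → ℝ) (r : ℝ), 0 < r →
    N ((eucBall n x r).indicator fun _ => (1 : ℝ≥0∞)) ≠ ∞)

/-- `N` is a ball Banach function norm: a ball quasi-Banach function norm that moreover
satisfies the triangle inequality and locally dominates the `L¹` norm. -/
def IsBallBanachNorm (n : ℕ) (N : ((Fin n → ℝ) → ℝ≥0∞) → ℝ≥0∞) : Prop :=
  IsBQBFNorm n N ∧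
  (∀ f g : (Fin n → ℝ) → ℝ≥0∞, Measurable f → Measurable g → N (f + g) ≤ N f + N g) ∧
  (∀ (x : Fin n → ℝ) (r : ℝ), 0 < r → ∃ C : ℝ≥0∞, 0 < C ∧ C ≠ ∞ ∧
    ∀ f : (Fin n → ℝ) → ℝ≥0∞, Measurable f → (∫⁻ y in eucBall n x r, f y) ≤ C * N f)

/-- The associate (Köthe dual) norm of a function norm `N`. -/
def assocNormOf (n : ℕ) (N : ((Fin n → ℝ) → ℝ≥0∞) → ℝ≥0∞)
    (f : (Fin n → ℝ) → ℝ≥0∞) : ℝ≥0∞ :=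
  ⨆ (g : (Fin n → ℝ) → ℝ≥0∞) (_ : Measurable g) (_ : N g = 1), ∫⁻ x, f x * g x

/-- The `θ`-convexification of a function norm: `‖f‖_{X^θ} = ‖|f|^θ‖_X^{1/θ}`
(here stated with `θ` in place of `1/p`, so `X^{1/p}` is `convexPow n (1/p) N`). -/
def convexPow (n : ℕ) (θ : ℝ) (N : ((Fin n → ℝ) → ℝ≥0∞) → ℝ≥0∞)
    (f : (Fin n → ℝ) → ℝ≥0∞) : ℝ≥0∞ :=
  N (fun x => f x ^ θ) ^ (1 / θ)

/-- The associate space norm of the mixed-norm Herz space, for complex-valued functions. -/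
def herzAssocNormC (n : ℕ) (α : Fin n → ℝ) (p q : Fin n → ℝ≥0∞)
    (f : (Fin n → ℝ) → ℂ) : ℝ≥0∞ :=
  ⨆ (g : (Fin n → ℝ) → ℂ) (_ : Measurable g) (_ : herzNormC n α p q g = 1),
    ∫⁻ x, (‖f x * g x‖₊ : ℝ≥0∞)

section

theorem absorb_aux {s : ℝ} (hs : 1 < s) {A K : ℝ≥0∞} (hA : A ≠ ∞)
    (h : A ≤ K * A ^ (1 - 1 / s)) : A ^ (1 / s) ≤ K := by
  have hs0 : 0 < 1 / s := by positivity
  have hs1 : 0 < 1 - 1 / s := by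
    have : 1 / s < 1 := by rw [div_lt_one (by linarith)]; exact hs
    linarith
  rcases eq_or_ne A 0 with rfl | h0
  · rw [ENNReal.zero_rpow_of_pos hs0]; exact zero_le
  · have e : A = A ^ (1 / s) * A ^ (1 - 1 / s) := by
      rw [← ENNReal.rpow_add _ _ h0 hA]; simp
    have hB0 : A ^ (1 - 1 / s) ≠ 0 := by
      intro hh; rcases (ENNReal.rpow_eq_zero_iff.1 hh) with h | h
      · exact h0 h.1
      · exact hA h.1
    have hB1 : A ^ (1 - 1 / s) ≠ ∞ := ENNReal.rpow_ne_top_of_nonneg hs1.le hA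
    exact (ENNReal.mul_le_mul_iff_left hB0 hB1).1 (e.symm.trans_le h)

theorem minkowski_lintegral {X Y : Type} [MeasurableSpace X] [MeasurableSpace Y]
    (μ : Measure X) (ν : Measure Y) [SigmaFinite μ] [SFinite ν] {p : ℝ} (hp : 1 < p)
    (f : Y → X → ℝ≥0∞) (hf : Measurable (Function.uncurry f)) :
    (∫⁻ x, (∫⁻ y, f y x ∂ν) ^ p ∂μ) ^ (1 / p) ≤ ∫⁻ y, (∫⁻ x, f y x ^ p ∂μ) ^ (1 / p) ∂ν := by
  have hp0 : 0 < p := by linarith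
  set G : X → ℝ≥0∞ := fun x => ∫⁻ y, f y x ∂ν with hG
  have hGm : Measurable G := hf.lintegral_prod_left'
  set R := ∫⁻ y, (∫⁻ x, f y x ^ p ∂μ) ^ (1 / p) ∂ν with hR
  let g : ℕ → X → ℝ≥0∞ := fun n => (spanningSets μ n).indicator (fun x => min (G x) n)
  have hgm : ∀ n, Measurable (g n) := fun n =>
    (hGm.min measurable_const).indicator (measurableSet_spanningSets μ n)
  have hgG : ∀ n x, g n x ≤ G x := fun n x => by
    by_cases hx : x ∈ spanningSets μ n
    · simp [g, hx]
    · simp [g, hx]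
  have key : ∀ n, (∫⁻ x, g n x ^ p ∂μ) ^ (1 / p) ≤ R := by
    intro n
    apply absorb_aux hp
    · have : ∫⁻ x, g n x ^ p ∂μ ≤ ∫⁻ x in spanningSets μ n, (n : ℝ≥0∞) ^ p ∂μ := by
        rw [← lintegral_indicator (measurableSet_spanningSets μ n)]
        apply lintegral_mono
        intro x
        by_cases hx : x ∈ spanningSets μ n
        · simp only [g, hx, Set.indicator_of_mem]
          exact ENNReal.rpow_le_rpow (min_le_right _ _) hp0.le
        · simp [g, hx, hp0]
      refine ne_top_of_le_ne_top ?_ this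
      rw [setLIntegral_const]
      exact ENNReal.mul_ne_top (ENNReal.rpow_ne_top_of_nonneg hp0.le (by simp))
        (measure_spanningSets_lt_top μ n).ne
    · have hpq : p.HolderConjugate (p / (p - 1)) := Real.HolderConjugate.conjExponent hp
      have step : ∀ y, ∫⁻ x, f y x * g n x ^ (p - 1) ∂μ ≤
          (∫⁻ x, f y x ^ p ∂μ) ^ (1 / p) * (∫⁻ x, g n x ^ p ∂μ) ^ (1 - 1 / p) := by
        intro y
        refine (ENNReal.lintegral_mul_le_Lp_mul_Lq μ hpq
          (hf.of_uncurry_left).aemeasurable ((hgm n).pow_const _).aemeasurable).trans ?_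
        have e1 : 1 / (p / (p - 1)) = 1 - 1 / p := by field_simp
        have e2 : (p - 1) * (p / (p - 1)) = p := by
          have : p - 1 ≠ 0 := by linarith
          field_simp
        simp_rw [← ENNReal.rpow_mul]
        rw [e1, e2]
      calc ∫⁻ x, g n x ^ p ∂μ ≤ ∫⁻ x, (∫⁻ y, f y x * g n x ^ (p - 1) ∂ν) ∂μ := by
            apply lintegral_mono
            intro x
            have hfin : g n x ≠ ∞ := by
              by_cases hx : x ∈ spanningSets μ n
              · simp [g, hx]
              · simp [g, hx]
            have : g n x ^ (p - 1) ≠ ∞ := ENNReal.rpow_ne_top_of_nonneg (by linarith) hfin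
            simp only
            rw [lintegral_mul_const' _ _ this]
            calc g n x ^ p = g n x ^ (1 + (p - 1)) := by ring_nf
              _ = g n x * g n x ^ (p - 1) := by
                  rw [ENNReal.rpow_add_of_nonneg _ _ zero_le_one (by linarith), ENNReal.rpow_one]
              _ ≤ _ := by gcongr; exact hgG n x
        _ = ∫⁻ y, (∫⁻ x, f y x * g n x ^ (p - 1) ∂μ) ∂ν := by
            rw [lintegral_lintegral_swap]
            refine Measurable.aemeasurable ?_
            have h1 : Measurable fun z : X × Y => f z.2 z.1 := hf.comp measurable_swap
            exact h1.mul (((hgm n).pow_const _).comp measurable_fst)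
        _ ≤ ∫⁻ y, (∫⁻ x, f y x ^ p ∂μ) ^ (1 / p) * (∫⁻ x, g n x ^ p ∂μ) ^ (1 - 1 / p) ∂ν :=
            lintegral_mono step
        _ = R * _ := by
            rw [lintegral_mul_const]
            have : Measurable fun z : Y × X => f z.1 z.2 ^ p := hf.pow_const _
            exact (this.lintegral_prod_right').pow_const _
  have lim : Tendsto (fun n => ∫⁻ x, g n x ^ p ∂μ) atTop (nhds (∫⁻ x, G x ^ p ∂μ)) := by
    apply lintegral_tendsto_of_tendsto_of_monotone
    · exact fun n => ((hgm n).pow_const _).aemeasurable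
    · refine Eventually.of_forall fun x n m hnm => ?_
      refine ENNReal.rpow_le_rpow ?_ hp0.le
      by_cases hx : x ∈ spanningSets μ n
      · have hx' := monotone_spanningSets μ hnm hx
        simp only [g, hx, hx', Set.indicator_of_mem]
        gcongr
      · simp [g, hx]
    · refine Eventually.of_forall fun x => ?_
      have h1 : Tendsto (fun n => g n x) atTop (nhds (G x)) := by
        have h2 : Tendsto (fun n : ℕ => min (G x) (n : ℝ≥0∞)) atTop (nhds (min (G x) ∞)) :=
          tendsto_const_nhds.min ENNReal.tendsto_nat_nhds_top
        rw [min_top_right] at h2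
        refine h2.congr' ?_
        have : ∃ k, x ∈ spanningSets μ k := by
          exact Set.mem_iUnion.1 ((iUnion_spanningSets μ).symm ▸ Set.mem_univ x)
        obtain ⟨k, hk⟩ := this
        filter_upwards [eventually_ge_atTop k] with n hn
        have := monotone_spanningSets μ hn hk
        simp [g, this]
      exact (ENNReal.continuous_rpow_const.tendsto _).comp h1
  exact le_of_tendsto' ((ENNReal.continuous_rpow_const.tendsto _).comp lim) key

/-- A lattice norm. -/
structure LN (Ω : Type) [MeasurableSpace Ω] where
  N : (Ω → ℝ≥0∞) → ℝ≥0∞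
  mono : ∀ {f g : Ω → ℝ≥0∞}, (∀ ω, f ω ≤ g ω) → N f ≤ N g
  smul : ∀ (c : ℝ≥0∞) (f : Ω → ℝ≥0∞), c ≠ ∞ → N (fun ω => c * f ω) = c * N f
  meas : ∀ {Y : Type} [MeasurableSpace Y] (f : Y → Ω → ℝ≥0∞),
    Measurable (Function.uncurry f) → Measurable fun y => N (f y)
  mink : ∀ {Y : Type} [MeasurableSpace Y] (ν : Measure Y) [SFinite ν] (f : Y → Ω → ℝ≥0∞),
    Measurable (Function.uncurry f) → N (fun ω => ∫⁻ y, f y ω ∂ν) ≤ ∫⁻ y, N (f y) ∂ν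
  mct : ∀ (f : ℕ → Ω → ℝ≥0∞), (∀ n, Measurable (f n)) → Monotone f →
    N (fun ω => ⨆ n, f n ω) ≤ ⨆ n, N (f n)

namespace LN

variable {Ω : Type} [MeasurableSpace Ω]

theorem tsum_le (ρ : LN Ω) {ι : Type} [Countable ι] (f : ι → Ω → ℝ≥0∞)
    (hf : ∀ i, Measurable (f i)) : ρ.N (fun ω => ∑' i, f i ω) ≤ ∑' i, ρ.N (f i) := by
  let _ : MeasurableSpace ι := ⊤
  have _ : MeasurableSingletonClass ι := ⟨fun _ => trivial⟩
  have := ρ.mink (Measure.count : Measure ι) f (measurable_from_prod_countable_right hf)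
  simpa only [lintegral_count] using this

theorem add_le (ρ : LN Ω) (f g : Ω → ℝ≥0∞) (hf : Measurable f) (hg : Measurable g) :
    ρ.N (fun ω => f ω + g ω) ≤ ρ.N f + ρ.N g := by
  have := ρ.tsum_le (ι := Bool) (fun b => if b then f else g)
    (by intro b; cases b <;> simpa)
  simp only [tsum_bool] at this
  simpa [add_comm] using this

theorem N_zero (ρ : LN Ω) : ρ.N (fun _ => 0) = 0 := by
  have := ρ.smul 0 (fun _ => 0) (by simp)
  simpa using this

/-- The trivial scalar norm. -/
def unit : LN Unit where
  N f := f ()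
  mono h := h ()
  smul _ _ _ := rfl
  meas _ hf := hf.comp (measurable_id.prodMk measurable_const)
  mink _ _ _ _ := le_rfl
  mct _ _ _ := le_rfl

/-- The Bochner type mixed norm. -/
def Lp {X : Type} [MeasurableSpace X] (μ : Measure X) [SigmaFinite μ] (p : ℝ) (hp : 1 < p)
    (ρ : LN Ω) : LN (X × Ω) where
  N f := (∫⁻ x, ρ.N (fun ω => f (x, ω)) ^ p ∂μ) ^ (1 / p)
  mono h := by
    have hp0 : 0 < p := by linarith
    refine ENNReal.rpow_le_rpow (lintegral_mono fun x => ?_) (by positivity)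
    exact ENNReal.rpow_le_rpow (ρ.mono fun ω => h _) hp0.le
  smul c f hc := by
    have hp0 : 0 < p := by linarith
    simp_rw [fun x => ρ.smul c (fun ω => f (x, ω)) hc, ENNReal.mul_rpow_of_nonneg _ _ hp0.le]
    rw [lintegral_const_mul' _ _ (ENNReal.rpow_ne_top_of_nonneg hp0.le hc),
      ENNReal.mul_rpow_of_nonneg _ _ (by positivity), ← ENNReal.rpow_mul,
      mul_one_div_cancel hp0.ne', ENNReal.rpow_one]
  meas {Y} _ f hf := by
    refine Measurable.pow_const ?_ _
    have h1 : Measurable (fun z : Y × X => ρ.N (fun ω => f z.1 (z.2, ω)) ^ p) := by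
      refine Measurable.pow_const ?_ _
      refine ρ.meas (fun (z : Y × X) ω => f z.1 (z.2, ω)) ?_
      exact hf.comp (by fun_prop : Measurable fun a : (Y × X) × Ω => (a.1.1, (a.1.2, a.2)))
    exact h1.lintegral_prod_right'
  mink {Y} _ ν _ f hf := by
    have hp0 : 0 < p := by linarith
    refine le_trans ?_ (minkowski_lintegral μ ν hp (fun y x => ρ.N (fun ω => f y (x, ω))) ?_)
    · refine ENNReal.rpow_le_rpow (lintegral_mono fun x => ?_) (by positivity)
      refine ENNReal.rpow_le_rpow ?_ hp0.le
      refine ρ.mink ν (fun y ω => f y (x, ω)) ?_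
      exact hf.comp (by fun_prop : Measurable fun a : Y × Ω => (a.1, (x, a.2)))
    · refine ρ.meas (fun (z : Y × X) ω => f z.1 (z.2, ω)) ?_
      exact hf.comp (by fun_prop : Measurable fun a : (Y × X) × Ω => (a.1.1, (a.1.2, a.2)))
  mct f hf hm := by
    have hp0 : 0 < p := by linarith
    have hmm : ∀ n, Measurable fun x => ρ.N (fun ω => f n (x, ω)) := fun n =>
      ρ.meas (fun x ω => f n (x, ω)) (hf n)
    have h1 : ∀ x, ρ.N (fun ω => ⨆ n, f n (x, ω)) ^ p ≤ ⨆ n, ρ.N (fun ω => f n (x, ω)) ^ p := by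
      intro x
      have h2 := ρ.mct (fun n ω => f n (x, ω)) (fun n => (hf n).comp (by fun_prop))
        (fun n m h ω => hm h _)
      refine (ENNReal.rpow_le_rpow h2 hp0.le).trans_eq ?_
      exact (ENNReal.orderIsoRpow p hp0).map_iSup _
    refine (ENNReal.rpow_le_rpow (lintegral_mono h1) (by positivity)).trans_eq ?_
    rw [lintegral_iSup]
    · exact (ENNReal.orderIsoRpow (1 / p) (by positivity)).map_iSup _
    · exact fun n => (hmm n).pow_const _
    · intro n m h x
      exact ENNReal.rpow_le_rpow (ρ.mono fun ω => hm h _) hp0.le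

/-- Weighted pull back. -/
def comap {Ω' : Type} [MeasurableSpace Ω'] (ρ : LN Ω) (w : Ω → ℝ≥0∞) (hw : Measurable w)
    (φ : Ω → Ω') (hφ : Measurable φ) (hwt : ∀ ω, w ω ≠ ∞) : LN Ω' where
  N f := ρ.N (fun ω => w ω * f (φ ω))
  mono h := ρ.mono fun ω => by gcongr; exact h _
  smul c f hc := by
    rw [← ρ.smul c _ hc]; congr 1; ext ω; ring
  meas f hf := by
    refine ρ.meas (fun y ω => w ω * f y (φ ω)) ?_
    exact (hw.comp measurable_snd).mul
      (hf.comp (measurable_fst.prodMk (hφ.comp measurable_snd)))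
  mink ν _ f hf := by
    refine le_trans (le_of_eq ?_) (ρ.mink ν (fun y ω => w ω * f y (φ ω)) ?_)
    · congr 1; ext ω; rw [lintegral_const_mul' _ _ (hwt ω)]
    · exact (hw.comp measurable_snd).mul
        (hf.comp (measurable_fst.prodMk (hφ.comp measurable_snd)))
  mct f hf hm := by
    refine le_trans (le_of_eq ?_) (ρ.mct (fun n ω => w ω * f n (φ ω)) ?_ ?_)
    · congr 1; ext ω; rw [ENNReal.mul_iSup]
    · exact fun n => hw.mul ((hf n).comp hφ)
    · intro n m h ω
      simp only
      gcongr
      exact hm h _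

end LN
end

section

structure Grid where
  d : ℕ → ℝ → ℤ
  v : ℕ → ℝ≥0∞
  meas : ∀ n, Measurable (d n)
  nest : ∀ n x y, d (n + 1) x = d (n + 1) y → d n x = d n y
  vol : ∀ n m, volume (d n ⁻¹' {m}) = v n
  v0 : ∀ n, v n ≠ 0
  vt : ∀ n, v n ≠ ∞
  vhalf : ∀ n, v n ≤ 2 * v (n + 1)

namespace Grid

variable (G : Grid) {Ω : Type} [MeasurableSpace Ω]

theorem nest_le {n m : ℕ} (h : n ≤ m) {x y : ℝ} (hxy : G.d m x = G.d m y) :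
    G.d n x = G.d n y := by
  induction m, h using Nat.le_induction with
  | base => exact hxy
  | succ k _ ih => exact ih (G.nest _ _ _ hxy)

/-- atom -/
def I (n : ℕ) (t : ℝ) : Set ℝ := G.d n ⁻¹' {G.d n t}

theorem measurableSet_I (n : ℕ) (t : ℝ) : MeasurableSet (G.I n t) :=
  G.meas n (measurableSet_singleton _)

theorem mem_I {n : ℕ} {t s : ℝ} : s ∈ G.I n t ↔ G.d n s = G.d n t := Iff.rfl

/-- averaging -/
def E (n : ℕ) (g : ℝ → ℝ≥0∞) (t : ℝ) : ℝ≥0∞ := (G.v n)⁻¹ * ∫⁻ s in G.I n t, g s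

/-- maximal function -/
def DM (L : ℕ) (g : ℝ → ℝ≥0∞) (t : ℝ) : ℝ≥0∞ := ⨆ (n : ℕ) (_ : n < L), G.E n g t

def Lev (n : ℕ) (A : Set ℝ) : Prop := ∀ x y, G.d n x = G.d n y → x ∈ A → y ∈ A

variable {G}

theorem Lev.measurableSet {n : ℕ} {A : Set ℝ} (h : G.Lev n A) : MeasurableSet A := by
  have : A = G.d n ⁻¹' (G.d n '' A) := by
    ext y; constructor
    · exact fun hy => ⟨y, hy, rfl⟩
    · rintro ⟨x, hx, hxy⟩; exact h x y hxy hx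
  rw [this]
  exact G.meas n (MeasurableSet.of_discrete)

theorem Lev.mono {n m : ℕ} {A : Set ℝ} (h : G.Lev n A) (hnm : n ≤ m) : G.Lev m A :=
  fun x y hxy => h x y (G.nest_le hnm hxy)

theorem Lev.inter {n : ℕ} {A B : Set ℝ} (h : G.Lev n A) (h' : G.Lev n B) : G.Lev n (A ∩ B) :=
  fun x y hxy hx => ⟨h x y hxy hx.1, h' x y hxy hx.2⟩

theorem lev_I (n : ℕ) (t : ℝ) : G.Lev n (G.I n t) := fun x y hxy hx => by
  rw [mem_I] at *; rw [← hxy, hx]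

theorem I_congr {n : ℕ} {x y : ℝ} (h : G.d n x = G.d n y) : G.I n x = G.I n y := by
  ext s; rw [mem_I, mem_I, h]

theorem E_congr {n : ℕ} {g : ℝ → ℝ≥0∞} {x y : ℝ} (h : G.d n x = G.d n y) :
    G.E n g x = G.E n g y := by
  rw [E, E, I_congr h]

theorem E_mono {n : ℕ} {g g' : ℝ → ℝ≥0∞} (h : ∀ s, g s ≤ g' s) (t : ℝ) :
    G.E n g t ≤ G.E n g' t := by
  unfold E; gcongr; exact h _

theorem DM_mono {L : ℕ} {g g' : ℝ → ℝ≥0∞} (h : ∀ s, g s ≤ g' s) (t : ℝ) :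
    G.DM L g t ≤ G.DM L g' t := iSup₂_mono fun _ _ => E_mono h t

theorem DM_mono_left {L L' : ℕ} (h : L ≤ L') {g : ℝ → ℝ≥0∞} (t : ℝ) :
    G.DM L g t ≤ G.DM L' g t :=
  iSup₂_le fun n hn => le_iSup₂_of_le n (hn.trans_le h) le_rfl

theorem E_le_DM {L n : ℕ} (h : n < L) (g : ℝ → ℝ≥0∞) (t : ℝ) : G.E n g t ≤ G.DM L g t :=
  le_iSup₂_of_le n h le_rfl

theorem E_half (n : ℕ) (g : ℝ → ℝ≥0∞) (t : ℝ) : G.E (n + 1) g t ≤ 2 * G.E n g t := by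
  unfold E
  rw [← mul_assoc]
  have h1 : (G.v (n + 1))⁻¹ ≤ 2 * (G.v n)⁻¹ := by
    have h2 := ENNReal.inv_le_inv.2 (G.vhalf n)
    rw [ENNReal.mul_inv (by simp) (by simp)] at h2
    calc (G.v (n + 1))⁻¹ = 2 * (2⁻¹ * (G.v (n + 1))⁻¹) := by
          rw [← mul_assoc, ENNReal.mul_inv_cancel (by simp) (by simp), one_mul]
      _ ≤ _ := by gcongr
  gcongr
  intro s hs
  exact G.nest _ _ _ hs

theorem E_eq_lintegral (n : ℕ) (g : ℝ → ℝ≥0∞) (t : ℝ) :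
    G.E n g t = (G.v n)⁻¹ * ∫⁻ s, (if G.d n s = G.d n t then g s else 0) := by
  unfold E
  rw [← lintegral_indicator (G.measurableSet_I n t)]
  congr 2
  ext s
  simp [Set.indicator, mem_I]

theorem measurable_E (n : ℕ) (f : ℝ → Ω → ℝ≥0∞) (hf : Measurable (Function.uncurry f)) :
    Measurable (Function.uncurry fun t ω => G.E n (fun s => f s ω) t) := by
  simp only [E_eq_lintegral]
  refine Measurable.const_mul ?_ _
  have : Measurable fun z : (ℝ × Ω) × ℝ => if G.d n z.2 = G.d n z.1.1 then f z.2 z.1.2 else 0 := by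
    refine Measurable.ite ?_ ?_ measurable_const
    · exact measurableSet_eq_fun ((G.meas n).comp measurable_snd)
        ((G.meas n).comp (measurable_fst.comp measurable_fst))
    · exact hf.comp (by fun_prop : Measurable fun z : (ℝ × Ω) × ℝ => (z.2, z.1.2))
  exact this.lintegral_prod_right'

theorem measurable_DM (L : ℕ) (f : ℝ → Ω → ℝ≥0∞) (hf : Measurable (Function.uncurry f)) :
    Measurable (Function.uncurry fun t ω => G.DM L (fun s => f s ω) t) := by
  refine Measurable.iSup fun n => Measurable.iSup fun _ => measurable_E n f hf

theorem measurable_DM_right (L : ℕ) (f : ℝ → Ω → ℝ≥0∞) (hf : Measurable (Function.uncurry f))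
    (t : ℝ) : Measurable fun ω => G.DM L (fun s => f s ω) t :=
  (measurable_DM L f hf).of_uncurry_left (x := t)

theorem measurable_E_scalar (n : ℕ) (φ : ℝ → ℝ≥0∞) (hφ : Measurable φ) :
    Measurable (G.E n φ) := by
  have := measurable_E (G := G) n (fun t (_ : Unit) => φ t) (hφ.comp measurable_fst)
  exact this.of_uncurry_right (y := ())

theorem setLIntegral_E {n : ℕ} {A : Set ℝ} (hA : G.Lev n A) (g : ℝ → ℝ≥0∞) :
    ∫⁻ t in A, G.E n g t = ∫⁻ t in A, g t := by
  have hU : A = ⋃ m : ℤ, A ∩ G.d n ⁻¹' {m} := by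
    ext x; simp
  have hm : ∀ m : ℤ, MeasurableSet (A ∩ G.d n ⁻¹' {m}) := fun m =>
    hA.measurableSet.inter (G.meas n (measurableSet_singleton _))
  have hd : Pairwise (Function.onFun Disjoint fun m : ℤ => A ∩ G.d n ⁻¹' {m}) := by
    intro a b hab
    refine Set.disjoint_left.2 ?_
    rintro x ⟨_, hx⟩ ⟨_, hy⟩
    exact hab (hx.symm.trans hy)
  rw [hU, lintegral_iUnion hm hd, lintegral_iUnion hm hd]
  congr 1; ext m
  by_cases hne : (A ∩ G.d n ⁻¹' {m}).Nonempty
  · obtain ⟨x, hx, hxm⟩ := hne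
    have hxm : G.d n x = m := hxm
    have e : A ∩ G.d n ⁻¹' {m} = G.I n x := by
      ext y; rw [mem_I]; constructor
      · rintro ⟨_, hy⟩; exact hy.trans hxm.symm
      · intro hy; exact ⟨hA x y hy.symm hx, hy.trans hxm⟩
    rw [e]
    have : ∫⁻ t in G.I n x, G.E n g t = ∫⁻ t in G.I n x, G.E n g x :=
      setLIntegral_congr_fun (G.measurableSet_I n x) fun t ht => E_congr ht
    rw [this, setLIntegral_const, E, I, G.vol, mul_comm, ← mul_assoc,
      ENNReal.mul_inv_cancel (G.v0 n) (G.vt n), one_mul]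
  · rw [Set.not_nonempty_iff_eq_empty.1 hne]; simp

theorem E_indicator {n k : ℕ} (hnk : n ≤ k) {A : Set ℝ} (hA : G.Lev n A) (g : ℝ → ℝ≥0∞) (t : ℝ) :
    G.E k (A.indicator g) t = A.indicator (G.E k g) t := by
  by_cases ht : t ∈ A
  · rw [Set.indicator_of_mem ht, E, E]
    congr 1
    refine setLIntegral_congr_fun (G.measurableSet_I k t) fun s hs => ?_
    have : s ∈ A := hA t s (G.nest_le hnk hs).symm ht
    simp [this]
  · rw [Set.indicator_of_notMem ht, E]
    have : ∫⁻ s in G.I k t, A.indicator g s = ∫⁻ s in G.I k t, 0 := by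
      refine setLIntegral_congr_fun (G.measurableSet_I k t) fun s hs => ?_
      have : s ∉ A := fun h => ht (hA s t (G.nest_le hnk hs) h)
      simp [this]
    rw [this]; simp

theorem DM_indicator {L : ℕ} {A : Set ℝ} (hA : G.Lev 0 A) (g : ℝ → ℝ≥0∞) (t : ℝ) :
    G.DM L (A.indicator g) t = A.indicator (G.DM L g) t := by
  simp only [DM, E_indicator (Nat.zero_le _) hA]
  by_cases ht : t ∈ A
  · simp [ht, DM]
  · simp [ht]

theorem norm_E_le (ρ : LN Ω) (n : ℕ) (f : ℝ → Ω → ℝ≥0∞) (hf : Measurable (Function.uncurry f))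
    (t : ℝ) : ρ.N (fun ω => G.E n (fun s => f s ω) t) ≤ G.E n (fun s => ρ.N (f s)) t := by
  unfold E
  rw [ρ.smul _ _ (ENNReal.inv_ne_top.2 (G.v0 n))]
  gcongr
  exact ρ.mink (volume.restrict (G.I n t)) f hf

end Grid
end

section
variable {Ω : Type} [MeasurableSpace Ω]

def HLWeak (ρ : LN Ω) (C : ℝ≥0∞) : Prop :=
  ∀ (G : Grid) (f : ℝ → Ω → ℝ≥0∞), Measurable (Function.uncurry f) → ∀ (L : ℕ) (l : ℝ≥0∞),
    l ≠ 0 → l ≠ ∞ →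
    l * volume {t | l < ρ.N (fun ω => G.DM L (fun s => f s ω) t)} ≤ C * ∫⁻ t, ρ.N (f t)

def HLStrong (ρ : LN Ω) (s : ℝ) (C : ℝ≥0∞) : Prop :=
  ∀ (G : Grid) (f : ℝ → Ω → ℝ≥0∞), Measurable (Function.uncurry f) → ∀ (L : ℕ),
    ∫⁻ t, ρ.N (fun ω => G.DM L (fun s => f s ω) t) ^ s ≤ C * ∫⁻ t, ρ.N (f t) ^ s

theorem scalar_weak (G : Grid) (φ : ℝ → ℝ≥0∞) (L : ℕ) (l : ℝ≥0∞) :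
    l * volume {t | l < G.DM L φ t} ≤ ∫⁻ t, φ t := by
  let S : ℕ → Set ℝ := fun n => {t | l < G.E n φ t ∧ ∀ j < n, G.E j φ t ≤ l}
  have hlev : ∀ n, G.Lev n (S n) := by
    rintro n x y hxy ⟨h1, h2⟩
    refine ⟨?_, fun j hj => ?_⟩
    · rw [← Grid.E_congr hxy]; exact h1
    · rw [← Grid.E_congr (G.nest_le hj.le hxy)]; exact h2 j hj
  have hdis : Pairwise (Function.onFun Disjoint S) := by
    intro a b hab
    refine Set.disjoint_left.2 fun x hx hy => ?_
    rcases lt_or_gt_of_ne hab with h | h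
    · exact absurd (hy.2 a h) (not_le.2 hx.1)
    · exact absurd (hx.2 b h) (not_le.2 hy.1)
  have hsub : {t | l < G.DM L φ t} ⊆ ⋃ n, S n := by
    intro t ht
    have ht : l < G.DM L φ t := ht
    have hex : ∃ n, l < G.E n φ t := by
      by_contra hcon
      push Not at hcon
      exact absurd (iSup₂_le fun n _ => hcon n) (not_le.2 ht)
    classical
    refine Set.mem_iUnion.2 ⟨Nat.find hex, Nat.find_spec hex, fun j hj => ?_⟩
    exact not_lt.1 (Nat.find_min hex hj)
  calc l * volume {t | l < G.DM L φ t} ≤ l * volume (⋃ n, S n) := by gcongr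
    _ = ∑' n, l * volume (S n) := by
        rw [measure_iUnion hdis fun n => (hlev n).measurableSet, ENNReal.tsum_mul_left]
    _ ≤ ∑' n, ∫⁻ t in S n, φ t := by
        refine ENNReal.tsum_le_tsum fun n => ?_
        rw [← Grid.setLIntegral_E (hlev n), ← setLIntegral_const]
        exact setLIntegral_mono' (hlev n).measurableSet fun x hx => hx.1.le
    _ = ∫⁻ t in ⋃ n, S n, φ t := (lintegral_iUnion (fun n => (hlev n).measurableSet) hdis _).symm
    _ ≤ _ := setLIntegral_le_lintegral _ _

theorem unit_weak : HLWeak LN.unit 1 := by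
  intro G f hf L l _ _
  rw [one_mul]
  exact scalar_weak G (fun t => f t ()) L l

theorem weak_of_strong (ρ : LN Ω) {s : ℝ} (hs : 1 < s) {C : ℝ≥0∞} (h : HLStrong ρ s C) :
    HLWeak ρ (1 + C * 2 ^ (s - 1)) := by
  intro G f hf L l hl0 hlt
  classical
  set φ : ℝ → ℝ≥0∞ := fun t => ρ.N (f t) with hφ
  have hex : ∀ t, ∃ n, l < G.E n φ t ∨ L ≤ n := fun t => ⟨L, Or.inr le_rfl⟩
  let σ : ℝ → ℕ := fun t => Nat.find (hex t)
  have hσ : ∀ n t, σ t = n ↔ (l < G.E n φ t ∨ L ≤ n) ∧ ∀ j < n, ¬ (l < G.E j φ t ∨ L ≤ j) :=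
    fun n t => Nat.find_eq_iff (hex t)
  let P : ℕ → Set ℝ := fun n => {t | σ t = n}
  have hP : ∀ n, G.Lev n (P n) := by
    intro n x y hxy hx
    have hx := (hσ n x).1 hx
    refine (hσ n y).2 ⟨?_, fun j hj => ?_⟩
    · rw [← Grid.E_congr hxy]; exact hx.1
    · rw [← Grid.E_congr (G.nest_le hj.le hxy)]; exact hx.2 j hj
  have hPd : Pairwise (Function.onFun Disjoint P) := by
    intro a b hab
    refine Set.disjoint_left.2 fun x hx hy => hab (hx.symm.trans hy)
  have hPu : (⋃ n, P n) = Set.univ := by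
    ext x; simp [P]
  have hσm : Measurable σ := measurable_to_countable' fun n => (hP n).measurableSet
  let g : ℝ → Ω → ℝ≥0∞ := fun t ω => if l < G.E 0 φ t then 0 else G.E (σ t) (fun s => f s ω) t
  have hφm : Measurable φ := ρ.meas f hf
  have hEφ : ∀ n, Measurable (G.E n φ) := fun n => Grid.measurable_E_scalar n φ hφm
  have hgm : Measurable (Function.uncurry g) := by
    refine Measurable.ite ?_ measurable_const ?_
    · exact measurableSet_lt measurable_const ((hEφ 0).comp measurable_fst)
    · have h1 : Measurable fun z : ℕ × (ℝ × Ω) => G.E z.1 (fun s => f s z.2.2) z.2.1 :=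
        measurable_from_prod_countable_right fun n => Grid.measurable_E n f hf
      exact h1.comp ((hσm.comp measurable_fst).prodMk measurable_id)
  have hgE : ∀ t, ρ.N (g t) ≤ G.E (σ t) φ t := by
    intro t
    by_cases h0 : l < G.E 0 φ t
    · have : g t = fun _ => 0 := by ext ω; simp [g, h0]
      rw [this, ρ.N_zero]; exact zero_le
    · have : g t = fun ω => G.E (σ t) (fun s => f s ω) t := by ext ω; simp only [g, h0, if_false]
      rw [this]; exact Grid.norm_E_le ρ _ f hf t
  have hg2 : ∀ t, ρ.N (g t) ≤ 2 * l := by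
    intro t
    by_cases h0 : l < G.E 0 φ t
    · have : g t = fun _ => 0 := by ext ω; simp [g, h0]
      rw [this, ρ.N_zero]; exact zero_le
    · refine (hgE t).trans ?_
      have hs := (hσ (σ t) t).1 rfl
      rcases hn : σ t with _ | n
      · calc G.E 0 φ t ≤ l := not_lt.1 h0
          _ ≤ 2 * l := by rw [two_mul]; exact le_self_add
      · refine (Grid.E_half n φ t).trans ?_
        have := hs.2 n (by omega)
        gcongr
        exact not_lt.1 fun hh => this (Or.inl hh)
  have hg1 : ∫⁻ t, ρ.N (g t) ≤ ∫⁻ t, φ t := by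
    rw [← setLIntegral_univ, ← setLIntegral_univ (f := φ), ← hPu,
      lintegral_iUnion (fun n => (hP n).measurableSet) hPd,
      lintegral_iUnion (fun n => (hP n).measurableSet) hPd]
    refine ENNReal.tsum_le_tsum fun n => ?_
    rw [← Grid.setLIntegral_E (hP n) φ]
    refine setLIntegral_mono' (hP n).measurableSet fun x hx => ?_
    have hx : σ x = n := hx
    rw [← hx]; exact hgE x
  have hgood : ∀ t, ¬ (l < G.DM L φ t) → ∀ n < L, ∀ ω,
      G.E n (fun s => f s ω) t = G.E n (fun s => g s ω) t := by
    intro t ht n hn ω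
    have ht' : ∀ k < L, G.E k φ t ≤ l := fun k hk => (Grid.E_le_DM hk φ t).trans (not_lt.1 ht)
    unfold Grid.E
    congr 1
    have hI : G.I n t = ⋃ k, G.I n t ∩ P k := by
      rw [← Set.inter_iUnion, hPu, Set.inter_univ]
    have hm : ∀ k, MeasurableSet (G.I n t ∩ P k) := fun k =>
      (G.measurableSet_I n t).inter (hP k).measurableSet
    have hd : Pairwise (Function.onFun Disjoint fun k => G.I n t ∩ P k) := fun a b hab =>
      (hPd hab).mono Set.inter_subset_right Set.inter_subset_right
    rw [hI, lintegral_iUnion hm hd, lintegral_iUnion hm hd]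
    congr 1; ext k
    rcases lt_or_ge k n with hk | hk
    · have : G.I n t ∩ P k = ∅ := by
        refine Set.eq_empty_of_forall_notMem ?_
        rintro x ⟨hx, hxk⟩
        rcases ((hσ k x).1 hxk).1 with h3 | h3
        · rw [Grid.E_congr (G.nest_le hk.le hx)] at h3
          exact absurd (ht' k (hk.trans hn)) (not_le.2 h3)
        · omega
      rw [this]; simp
    · have hlev : G.Lev k (G.I n t ∩ P k) := ((Grid.lev_I n t).mono hk).inter (hP k)
      rw [← Grid.setLIntegral_E hlev]
      refine setLIntegral_congr_fun hlev.measurableSet ?_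
      rintro x ⟨hx, hxk⟩
      have hxk : σ x = k := hxk
      have h0 : ¬ (l < G.E 0 φ x) := by
        rw [Grid.E_congr (G.nest_le (Nat.zero_le n) hx)]
        exact not_lt.2 (ht' 0 (by omega))
      simp only [g, h0, if_false, hxk]
  have hsub : {t | l < ρ.N (fun ω => G.DM L (fun s => f s ω) t)} ⊆
      {t | l < G.DM L φ t} ∪ {t | l ≤ ρ.N (fun ω => G.DM L (fun s => g s ω) t)} := by
    intro t ht
    by_cases h1 : l < G.DM L φ t
    · exact Or.inl h1
    · right
      have e : (fun ω => G.DM L (fun s => f s ω) t) = fun ω => G.DM L (fun s => g s ω) t := by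
        ext ω
        unfold Grid.DM
        exact iSup_congr fun n => iSup_congr fun hn => hgood t h1 n hn ω
      have ht : l < ρ.N (fun ω => G.DM L (fun s => f s ω) t) := ht
      rw [e] at ht
      exact ht.le
  have hs0 : 0 < s := by linarith
  have hls0 : l ^ (s - 1) ≠ 0 := by
    intro hh; rcases (ENNReal.rpow_eq_zero_iff.1 hh) with h | h
    · exact hl0 h.1
    · exact hlt h.1
  have hlst : l ^ (s - 1) ≠ ∞ := ENNReal.rpow_ne_top_of_nonneg (by linarith) hlt
  have hbig : l * volume {t | l ≤ ρ.N (fun ω => G.DM L (fun s => g s ω) t)} ≤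
      C * 2 ^ (s - 1) * ∫⁻ t, φ t := by
    have hDm : Measurable fun t => ρ.N (fun ω => G.DM L (fun s => g s ω) t) :=
      ρ.meas _ (Grid.measurable_DM L g hgm)
    have c1 : l ^ s * volume {t | l ≤ ρ.N (fun ω => G.DM L (fun s => g s ω) t)} ≤
        C * (2 * l) ^ (s - 1) * ∫⁻ t, φ t := by
      calc _ ≤ l ^ s * volume {t | l ^ s ≤ ρ.N (fun ω => G.DM L (fun s => g s ω) t) ^ s} := by
            refine mul_le_mul_right (measure_mono fun t ht => ?_) _
            exact ENNReal.rpow_le_rpow ht hs0.le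
        _ ≤ _ := mul_meas_ge_le_lintegral (hDm.pow_const _) _
        _ ≤ C * ∫⁻ t, ρ.N (g t) ^ s := h G g hgm L
        _ ≤ C * ∫⁻ t, (2 * l) ^ (s - 1) * ρ.N (g t) := by
            gcongr with t
            calc ρ.N (g t) ^ s = ρ.N (g t) ^ ((s - 1) + 1) := by ring_nf
              _ = ρ.N (g t) ^ (s - 1) * ρ.N (g t) := by
                rw [ENNReal.rpow_add_of_nonneg _ _ (by linarith) zero_le_one, ENNReal.rpow_one]
              _ ≤ _ := by
                gcongr
                exact hg2 t
        _ = C * ((2 * l) ^ (s - 1) * ∫⁻ t, ρ.N (g t)) := by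
            rw [lintegral_const_mul _ (ρ.meas g hgm)]
        _ ≤ _ := by rw [mul_assoc]; gcongr
    rw [ENNReal.mul_rpow_of_nonneg _ _ (by linarith : (0:ℝ) ≤ s - 1)] at c1
    have e : l ^ s = l ^ (s - 1) * l := by
      calc l ^ s = l ^ ((s - 1) + 1) := by ring_nf
        _ = _ := by rw [ENNReal.rpow_add_of_nonneg _ _ (by linarith) zero_le_one, ENNReal.rpow_one]
    rw [e] at c1
    refine (ENNReal.mul_le_mul_iff_right hls0 hlst).1 ?_
    calc _ = l ^ (s - 1) * l * volume {t | l ≤ ρ.N (fun ω => G.DM L (fun s => g s ω) t)} := by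
          rw [mul_assoc]
      _ ≤ _ := c1
      _ = _ := by ring
  calc _ ≤ l * (volume {t | l < G.DM L φ t} +
        volume {t | l ≤ ρ.N (fun ω => G.DM L (fun s => g s ω) t)}) := by
        gcongr
        exact (measure_mono hsub).trans (measure_union_le _ _)
    _ ≤ (∫⁻ t, φ t) + C * 2 ^ (s - 1) * ∫⁻ t, φ t := by
        rw [mul_add]
        exact add_le_add (scalar_weak G φ L l) hbig
    _ = _ := by rw [add_mul, one_mul]

theorem doob_ineq (ρ : LN Ω) {C : ℝ≥0∞} (h : HLWeak ρ C) (G : Grid) (f : ℝ → Ω → ℝ≥0∞)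
    (hf : Measurable (Function.uncurry f)) (L : ℕ) (l : ℝ≥0∞) (hl0 : l ≠ 0) (hlt : l ≠ ∞) :
    l * volume {t | 2 * l < ρ.N (fun ω => G.DM L (fun s => f s ω) t)} ≤
      C * ∫⁻ t in {t | l < ρ.N (fun ω => G.DM L (fun s => f s ω) t)}, ρ.N (f t) := by
  let A : ℕ → ℝ → ℝ≥0∞ := fun n t => ρ.N (fun ω => G.DM n (fun s => f s ω) t)
  have hAmono : ∀ t, Monotone fun n => A n t := fun t n m hnm =>
    ρ.mono fun ω => Grid.DM_mono_left hnm t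
  have hA0 : ∀ t, A 0 t = 0 := fun t => by
    have : (fun ω => G.DM 0 (fun s => f s ω) t) = fun _ => 0 := by
      ext ω; simp [Grid.DM]
    simp only [A, this, ρ.N_zero]
  let S : ℕ → Set ℝ := fun n => {t | A n t ≤ l ∧ l < A (n + 1) t}
  have hAc : ∀ n x y, G.d n x = G.d n y → ∀ k ≤ n + 1, A k x = A k y := by
    intro n x y hxy k hk
    simp only [A]
    congr 1; ext ω
    unfold Grid.DM
    exact iSup_congr fun j => iSup_congr fun hj => Grid.E_congr (G.nest_le (by omega) hxy)
  have hlev : ∀ n, G.Lev n (S n) := by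
    rintro n x y hxy ⟨h1, h2⟩
    refine ⟨?_, ?_⟩
    · rw [← hAc n x y hxy n (by omega)]; exact h1
    · rw [← hAc n x y hxy (n + 1) le_rfl]; exact h2
  have hdis : Pairwise (Function.onFun Disjoint S) := by
    have aux : ∀ a b, a < b → Disjoint (S a) (S b) := fun a b hab =>
      Set.disjoint_left.2 fun x hx hy =>
        absurd (hx.2.trans_le ((hAmono x hab).trans hy.1)) (lt_irrefl _)
    intro a b hab
    rcases lt_or_gt_of_ne hab with h | h
    · exact aux a b h
    · exact (aux b a h).symm
  have hU : {t | l < A L t} = ⋃ n ∈ Finset.range L, S n := by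
    ext t
    simp only [Set.mem_ofPred_eq, Finset.mem_range, Set.mem_iUnion, exists_prop]
    constructor
    · intro ht
      classical
      have hex : ∃ n, l < A n t := ⟨L, ht⟩
      rcases hn : Nat.find hex with _ | n
      · have := Nat.find_spec hex
        rw [hn, hA0] at this
        exact absurd this (not_lt.2 zero_le)
      · have h1 := Nat.find_spec hex
        rw [hn] at h1
        have h2 := Nat.find_min hex (m := n) (by omega)
        have h3 := Nat.find_min' hex ht
        exact ⟨n, by omega, not_lt.1 h2, h1⟩
    · rintro ⟨n, hn, h1, h2⟩
      exact h2.trans_le (hAmono t hn)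
  let fS : ℕ → ℝ → Ω → ℝ≥0∞ := fun n t ω => (S n).indicator (fun s => f s ω) t
  have hfSm : ∀ n, Measurable (Function.uncurry (fS n)) := fun n => by
    have : Function.uncurry (fS n) = (Prod.fst ⁻¹' (S n)).indicator (Function.uncurry f) := by
      ext ⟨t, ω⟩
      simp only [Function.uncurry, fS, Set.indicator, Set.mem_preimage]
    rw [this]
    exact hf.indicator (measurable_fst (hlev n).measurableSet)
  have hfSN : ∀ n t, ρ.N (fS n t) = (S n).indicator (fun t => ρ.N (f t)) t := fun n t => by
    by_cases ht : t ∈ S n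
    · simp [fS, ht]
    · simp [fS, ht, ρ.N_zero]
  have hsub : {t | 2 * l < A L t} ⊆ ⋃ n ∈ Finset.range L,
      {t | l < ρ.N (fun ω => G.DM L (fun s => fS n s ω) t)} := by
    intro t ht
    have ht : 2 * l < A L t := ht
    have ht1 : t ∈ {t | l < A L t} :=
      lt_of_le_of_lt (by rw [two_mul]; exact le_self_add) ht
    rw [hU] at ht1
    simp only [Set.mem_iUnion] at ht1 ⊢
    obtain ⟨n, hn, htn⟩ := ht1
    refine ⟨n, hn, ?_⟩
    have hle : A L t ≤ A n t + ρ.N (fun ω => G.DM L (fun s => fS n s ω) t) := by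
      refine le_trans (ρ.mono ?_) (ρ.add_le _ _ ?_ ?_)
      · intro ω
        refine iSup₂_le fun j hj => ?_
        rcases lt_or_ge j n with hjn | hjn
        · exact (Grid.E_le_DM hjn _ t).trans le_self_add
        · refine le_trans ?_ le_add_self
          refine le_trans (le_of_eq ?_) (Grid.E_le_DM hj _ t)
          have := Grid.E_indicator hjn (hlev n) (fun s => f s ω) t
          rw [Set.indicator_of_mem htn] at this
          exact this.symm
      · exact Grid.measurable_DM_right n f hf t
      · exact Grid.measurable_DM_right L (fS n) (hfSm n) t
    by_contra hcon
    have hcon : ρ.N (fun ω => G.DM L (fun s => fS n s ω) t) ≤ l := not_lt.1 hcon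
    refine absurd (hle.trans (add_le_add htn.1 hcon)) ?_
    rw [← two_mul]; exact not_le.2 ht
  calc _ ≤ l * ∑ n ∈ Finset.range L,
        volume {t | l < ρ.N (fun ω => G.DM L (fun s => fS n s ω) t)} := by
        gcongr
        exact (measure_mono hsub).trans (measure_biUnion_finset_le _ _)
    _ ≤ ∑ n ∈ Finset.range L, C * ∫⁻ t in S n, ρ.N (f t) := by
        rw [Finset.mul_sum]
        refine Finset.sum_le_sum fun n _ => ?_
        refine (h G (fS n) (hfSm n) L l hl0 hlt).trans_eq ?_
        simp_rw [hfSN]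
        rw [lintegral_indicator (hlev n).measurableSet]
    _ = C * ∫⁻ t in {t | l < A L t}, ρ.N (f t) := by
        rw [hU, lintegral_biUnion_finset (fun a _ b _ hab => hdis hab)
          (fun n _ => (hlev n).measurableSet), Finset.mul_sum]

end

section
variable {Ω : Type} [MeasurableSpace Ω]

def doobConst (s : ℝ) (C : ℝ≥0∞) : ℝ≥0∞ :=
  (2 ^ s * (ENNReal.ofReal s * C * (ENNReal.ofReal (s - 1))⁻¹)) ^ s

theorem doobConst_ne_top {s : ℝ} (hs : 1 < s) {C : ℝ≥0∞} (hC : C ≠ ∞) : doobConst s C ≠ ∞ := by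
  refine ENNReal.rpow_ne_top_of_nonneg (by linarith) ?_
  refine ENNReal.mul_ne_top (ENNReal.rpow_ne_top_of_nonneg (by linarith) (by simp)) ?_
  refine ENNReal.mul_ne_top (ENNReal.mul_ne_top (by simp) hC) ?_
  rw [ENNReal.inv_ne_top]
  exact (ENNReal.ofReal_pos.2 (by linarith)).ne'

theorem doob_trunc (μ : Measure ℝ) [IsFiniteMeasure μ] {s : ℝ} (hs : 1 < s) (C : ℝ≥0∞)
    (F φ : ℝ → ℝ≥0∞) (hF : Measurable F) (hφ : Measurable φ)
    (h : ∀ l : ℝ≥0∞, l ≠ 0 → l ≠ ∞ → l * μ {t | 2 * l < F t} ≤ C * ∫⁻ t in {t | l < F t}, φ t ∂μ)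
    (N : ℕ) : ∫⁻ t, (min (F t) N) ^ s ∂μ ≤ doobConst s C * ∫⁻ t, φ t ^ s ∂μ := by
  have hs0 : 0 < s := by linarith
  set k : ℝ → ℝ≥0∞ := fun t => min (F t) N with hk
  have hkm : Measurable k := hF.min measurable_const
  have hkt : ∀ t, k t ≠ ∞ := fun t => ne_top_of_le_ne_top (by simp) (min_le_right (F t) (N : ℝ≥0∞))
  set H : ℝ → ℝ := fun t => (k t).toReal with hH
  have hHm : Measurable H := hkm.ennreal_toReal
  have hH0 : ∀ t, 0 ≤ H t := fun t => ENNReal.toReal_nonneg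
  have hHk : ∀ t, ENNReal.ofReal (H t) = k t := fun t => ENNReal.ofReal_toReal (hkt t)
  set ν := μ.withDensity φ with hν
  have hs1 : ENNReal.ofReal (s - 1) ≠ 0 := (ENNReal.ofReal_pos.2 (by linarith)).ne'
  have LA := lintegral_rpow_eq_lintegral_meas_lt_mul μ (f := fun t => H t / 2)
    (Eventually.of_forall fun t => by have := hH0 t; simp only [Pi.zero_apply]; positivity)
    (hHm.div_const 2).aemeasurable hs0
  have LB := lintegral_rpow_eq_lintegral_meas_lt_mul ν (f := H)
    (Eventually.of_forall hH0) hHm.aemeasurable (by linarith : 0 < s - 1)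
  have step : ∀ l ∈ Set.Ioi (0:ℝ), μ {t | l < H t / 2} * ENNReal.ofReal (l ^ (s - 1)) ≤
      C * (ν {t | l < H t} * ENNReal.ofReal (l ^ (s - 1 - 1))) := by
    intro l hl
    have hl : 0 < l := hl
    have e1 : ENNReal.ofReal (l ^ (s - 1)) =
        ENNReal.ofReal l * ENNReal.ofReal (l ^ (s - 1 - 1)) := by
      rw [← ENNReal.ofReal_mul hl.le]
      congr 1
      rw [Real.rpow_sub_one hl.ne' (s - 1)]
      field_simp
    rw [e1]
    by_cases hne : ∃ t, l < H t / 2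
    · obtain ⟨t0, ht0⟩ := hne
      have hlN : ENNReal.ofReal l < N := by
        have : l < H t0 := by linarith
        have h2 : ENNReal.ofReal l < ENNReal.ofReal (H t0) :=
          (ENNReal.ofReal_lt_ofReal_iff (hl.trans this)).2 this
        rw [hHk] at h2
        exact h2.trans_le (min_le_right _ _)
      have h1 := h (ENNReal.ofReal l) (ENNReal.ofReal_pos.2 hl).ne' (by simp)
      have sub1 : {t | l < H t / 2} ⊆ {t | 2 * ENNReal.ofReal l < F t} := by
        intro t ht
        have ht : l < H t / 2 := ht
        have h3 : 2 * l < H t := by linarith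
        have h2 : ENNReal.ofReal (2 * l) < ENNReal.ofReal (H t) :=
          (ENNReal.ofReal_lt_ofReal_iff (by linarith)).2 h3
        rw [hHk, ENNReal.ofReal_mul (by norm_num), ENNReal.ofReal_ofNat] at h2
        exact h2.trans_le (min_le_left _ _)
      have sub2 : {t | ENNReal.ofReal l < F t} ⊆ {t | l < H t} := by
        intro t ht
        have h2 : ENNReal.ofReal l < k t := lt_min ht hlN
        rw [← hHk] at h2
        exact (ENNReal.ofReal_lt_ofReal_iff_of_nonneg hl.le).1 h2
      have e2 : ν {t | l < H t} = ∫⁻ t in {t | l < H t}, φ t ∂μ :=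
        withDensity_apply _ (measurableSet_lt measurable_const hHm)
      rw [e2]
      calc _ = (ENNReal.ofReal l * μ {t | l < H t / 2}) * ENNReal.ofReal (l ^ (s - 1 - 1)) := by ring
        _ ≤ (ENNReal.ofReal l * μ {t | 2 * ENNReal.ofReal l < F t}) *
              ENNReal.ofReal (l ^ (s - 1 - 1)) := by
            gcongr
        _ ≤ (C * ∫⁻ t in {t | ENNReal.ofReal l < F t}, φ t ∂μ) *
              ENNReal.ofReal (l ^ (s - 1 - 1)) := by gcongr
        _ ≤ (C * ∫⁻ t in {t | l < H t}, φ t ∂μ) * ENNReal.ofReal (l ^ (s - 1 - 1)) := by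
            gcongr
        _ = _ := by ring
    · have : {t | l < H t / 2} = ∅ := by
        refine Set.eq_empty_of_forall_notMem fun t ht => hne ⟨t, ht⟩
      rw [this]; simp
  have eA : ∫⁻ t, ENNReal.ofReal ((H t / 2) ^ s) ∂μ = (2 ^ s)⁻¹ * ∫⁻ t, k t ^ s ∂μ := by
    rw [← lintegral_const_mul _ (hkm.pow_const _)]
    congr 1; ext t
    rw [← ENNReal.ofReal_rpow_of_nonneg (by have := hH0 t; positivity) hs0.le,
      ENNReal.ofReal_div_of_pos (by norm_num), hHk, ENNReal.div_rpow_of_nonneg _ _ hs0.le,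
      ENNReal.div_eq_inv_mul, ENNReal.ofReal_ofNat]
  have eB : ∫⁻ t, ENNReal.ofReal (H t ^ (s - 1)) ∂ν = ∫⁻ t, φ t * k t ^ (s - 1) ∂μ := by
    simp_rw [← fun t => ENNReal.ofReal_rpow_of_nonneg (hH0 t) (by linarith : 0 ≤ s - 1), hHk]
    rw [hν, lintegral_withDensity_eq_lintegral_mul _ hφ (hkm.pow_const _)]
    rfl
  set A := ∫⁻ t, k t ^ s ∂μ with hA
  have hAt : A ≠ ∞ := by
    have : A ≤ ∫⁻ t, (N : ℝ≥0∞) ^ s ∂μ :=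
      lintegral_mono fun t => ENNReal.rpow_le_rpow (min_le_right _ _) hs0.le
    refine ne_top_of_le_ne_top ?_ this
    rw [lintegral_const]
    exact ENNReal.mul_ne_top (ENNReal.rpow_ne_top_of_nonneg hs0.le (by simp)) (measure_ne_top _ _)
  set B := ∫⁻ t, φ t ^ s ∂μ with hB
  have hol : ∫⁻ t, φ t * k t ^ (s - 1) ∂μ ≤ B ^ (1 / s) * A ^ (1 - 1 / s) := by
    have hpq : s.HolderConjugate (s / (s - 1)) := Real.HolderConjugate.conjExponent hs
    refine (ENNReal.lintegral_mul_le_Lp_mul_Lq μ hpq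
      hφ.aemeasurable (hkm.pow_const _).aemeasurable).trans ?_
    have e1 : 1 / (s / (s - 1)) = 1 - 1 / s := by field_simp
    have e2 : (s - 1) * (s / (s - 1)) = s := by
      have : s - 1 ≠ 0 := by linarith
      field_simp
    simp_rw [← ENNReal.rpow_mul]
    rw [e1, e2]
  have h2s : (2:ℝ≥0∞) ^ s ≠ 0 := by
    intro hh; rcases (ENNReal.rpow_eq_zero_iff.1 hh) with h | h <;> simp at h
  have h2t : (2:ℝ≥0∞) ^ s ≠ ∞ := ENNReal.rpow_ne_top_of_nonneg hs0.le (by simp)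
  set J := ∫⁻ (t : ℝ) in Set.Ioi 0, ν {a | t < H a} * ENNReal.ofReal (t ^ (s - 1 - 1)) with hJ
  have main : (2 ^ s)⁻¹ * A ≤ ENNReal.ofReal s * C * (ENNReal.ofReal (s - 1))⁻¹ *
      (B ^ (1 / s) * A ^ (1 - 1 / s)) := by
    rw [← eA, LA]
    calc _ ≤ ENNReal.ofReal s * ∫⁻ l in Set.Ioi 0,
          C * (ν {t | l < H t} * ENNReal.ofReal (l ^ (s - 1 - 1))) := by
          exact mul_le_mul_right (setLIntegral_mono' measurableSet_Ioi step) _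
      _ = ENNReal.ofReal s * (C * J) := by
          rw [lintegral_const_mul]
          refine Measurable.mul ?_ (by fun_prop)
          have : Antitone fun l : ℝ => ν {t | l < H t} := fun a b hab =>
            measure_mono fun t ht => lt_of_le_of_lt hab ht
          exact this.measurable
      _ = ENNReal.ofReal s * C * (ENNReal.ofReal (s - 1))⁻¹ * (ENNReal.ofReal (s - 1) * J) := by
          rw [mul_assoc (_ * C), ← mul_assoc _ (ENNReal.ofReal (s - 1)),
            ENNReal.inv_mul_cancel hs1 (by simp), one_mul, mul_assoc]
      _ ≤ _ := by
          rw [← LB, eB]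
          gcongr
  have main2 : A ≤ (2 ^ s * (ENNReal.ofReal s * C * (ENNReal.ofReal (s - 1))⁻¹)) * B ^ (1 / s) *
      A ^ (1 - 1 / s) := by
    calc A = 2 ^ s * ((2 ^ s)⁻¹ * A) := by
          rw [← mul_assoc, ENNReal.mul_inv_cancel h2s h2t, one_mul]
      _ ≤ 2 ^ s * _ := mul_le_mul_right main _
      _ = _ := by ring
  have fin := absorb_aux hs hAt main2
  have fin2 := ENNReal.rpow_le_rpow fin hs0.le
  rw [ENNReal.mul_rpow_of_nonneg _ _ hs0.le, ← ENNReal.rpow_mul, ← ENNReal.rpow_mul,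
    one_div_mul_cancel hs0.ne', ENNReal.rpow_one, ENNReal.rpow_one] at fin2
  exact fin2

theorem doob_abstract (μ : Measure ℝ) [IsFiniteMeasure μ] {s : ℝ} (hs : 1 < s) (C : ℝ≥0∞)
    (F φ : ℝ → ℝ≥0∞) (hF : Measurable F) (hφ : Measurable φ)
    (h : ∀ l : ℝ≥0∞, l ≠ 0 → l ≠ ∞ → l * μ {t | 2 * l < F t} ≤ C * ∫⁻ t in {t | l < F t}, φ t ∂μ) :
    ∫⁻ t, (F t) ^ s ∂μ ≤ doobConst s C * ∫⁻ t, φ t ^ s ∂μ := by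
  have hs0 : 0 < s := by linarith
  have lim : Tendsto (fun n : ℕ => ∫⁻ t, (min (F t) n) ^ s ∂μ) atTop (nhds (∫⁻ t, F t ^ s ∂μ)) := by
    apply lintegral_tendsto_of_tendsto_of_monotone
    · exact fun n => ((hF.min measurable_const).pow_const _).aemeasurable
    · refine Eventually.of_forall fun x n m hnm => ?_
      refine ENNReal.rpow_le_rpow ?_ hs0.le
      gcongr
    · refine Eventually.of_forall fun x => ?_
      have h2 : Tendsto (fun n : ℕ => min (F x) (n : ℝ≥0∞)) atTop (nhds (min (F x) ∞)) :=
        tendsto_const_nhds.min ENNReal.tendsto_nat_nhds_top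
      rw [min_top_right] at h2
      exact (ENNReal.continuous_rpow_const.tendsto _).comp h2
  exact le_of_tendsto' lim (doob_trunc μ hs C F φ hF hφ h)

theorem strong_of_weak (ρ : LN Ω) {s : ℝ} (hs : 1 < s) {C : ℝ≥0∞} (h : HLWeak ρ C) :
    HLStrong ρ s (doobConst s C) := by
  intro G f hf L
  have hs0 : 0 < s := by linarith
  set F : ℝ → ℝ≥0∞ := fun t => ρ.N (fun ω => G.DM L (fun s => f s ω) t) with hF
  have hFm : Measurable F := ρ.meas _ (Grid.measurable_DM L f hf)
  have hφm : Measurable fun t => ρ.N (f t) := ρ.meas f hf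
  let B : ℕ → Set ℝ := fun M => G.d 0 ⁻¹' (Set.Icc (-(M:ℤ)) M)
  have hlev : ∀ M, G.Lev 0 (B M) := fun M x y hxy hx => by
    simp only [B, Set.mem_preimage] at *
    rwa [← hxy]
  have hfin : ∀ M, volume (B M) < ∞ := by
    intro M
    have : B M = ⋃ m ∈ Finset.Icc (-(M:ℤ)) M, G.d 0 ⁻¹' {m} := by
      ext x; simp [B]
    rw [this]
    refine (measure_biUnion_finset_le _ _).trans_lt ?_
    refine ENNReal.sum_lt_top.2 fun m _ => ?_
    rw [G.vol]
    exact lt_top_iff_ne_top.2 (G.vt 0)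
  have hU : (⋃ M, B M) = Set.univ := by
    refine Set.eq_univ_of_forall fun x => Set.mem_iUnion.2 ⟨(G.d 0 x).natAbs, ?_⟩
    simp only [B, Set.mem_preimage, Set.mem_Icc]
    omega
  have hdir : Directed (· ⊆ ·) B := by
    refine Monotone.directed_le fun a b hab x hx => ?_
    simp only [B, Set.mem_preimage, Set.mem_Icc] at *
    omega
  have key : ∀ M, ∫⁻ t in B M, F t ^ s ≤ doobConst s C * ∫⁻ t, ρ.N (f t) ^ s := by
    intro M
    have : IsFiniteMeasure (volume.restrict (B M)) := ⟨by simpa using hfin M⟩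
    have hBm := (hlev M).measurableSet
    refine (doob_abstract (volume.restrict (B M)) hs C F (fun t => ρ.N (f t)) hFm hφm ?_).trans ?_
    · intro l hl0 hlt
      let fB : ℝ → Ω → ℝ≥0∞ := fun t ω => (B M).indicator (fun s => f s ω) t
      have hfBm : Measurable (Function.uncurry fB) := by
        have : Function.uncurry fB = (Prod.fst ⁻¹' (B M)).indicator (Function.uncurry f) := by
          ext ⟨t, ω⟩
          by_cases ht : t ∈ B M
          · have h2 : (t, ω) ∈ Prod.fst ⁻¹' (B M) := ht
            rw [Set.indicator_of_mem h2]
            exact Set.indicator_of_mem ht (fun s => f s ω)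
          · have h2 : (t, ω) ∉ Prod.fst ⁻¹' (B M) := ht
            rw [Set.indicator_of_notMem h2]
            exact Set.indicator_of_notMem ht (fun s => f s ω)
        rw [this]
        exact hf.indicator (measurable_fst hBm)
      have hfBN : ∀ t, ρ.N (fB t) = (B M).indicator (fun t => ρ.N (f t)) t := fun t => by
        by_cases ht : t ∈ B M
        · simp [fB, ht]
        · simp [fB, ht, ρ.N_zero]
      have hFB : ∀ t, ρ.N (fun ω => G.DM L (fun s => fB s ω) t) = (B M).indicator F t := by
        intro t
        have e : (fun ω => G.DM L (fun s => fB s ω) t) =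
            fun ω => (B M).indicator (G.DM L (fun s => f s ω)) t := by
          ext ω
          exact Grid.DM_indicator (hlev M) _ t
        rw [e]
        by_cases ht : t ∈ B M
        · simp [ht, F]
        · simp [ht, ρ.N_zero]
      have h1 := doob_ineq ρ h G fB hfBm L l hl0 hlt
      simp_rw [hFB, hfBN] at h1
      have e1 : ∀ c : ℝ≥0∞, {t | c < (B M).indicator F t} = {t | c < F t} ∩ B M := by
        intro c
        ext t
        by_cases ht : t ∈ B M
        · simp [ht]
        · simp [ht]
      have hm : ∀ c : ℝ≥0∞, MeasurableSet {t | c < F t} := fun c =>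
        measurableSet_lt measurable_const hFm
      rw [e1, e1] at h1
      rw [Measure.restrict_apply (hm _), Measure.restrict_restrict (hm _)]
      refine h1.trans_eq ?_
      congr 1
      refine setLIntegral_congr_fun ((hm _).inter hBm) fun t ht => ?_
      simp [ht.2]
    · gcongr
      exact Measure.restrict_le_self
  rw [← setLIntegral_univ, ← hU, setLIntegral_iUnion_of_directed _ hdir]
  exact iSup_le key

/-- Hardy Littlewood property. -/
def HL (ρ : LN Ω) : Prop := ∃ C : ℝ≥0∞, C ≠ ∞ ∧ HLWeak ρ C

theorem HL.strong {ρ : LN Ω} (h : HL ρ) {s : ℝ} (hs : 1 < s) : ∃ C : ℝ≥0∞, C ≠ ∞ ∧ HLStrong ρ s C := by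
  obtain ⟨C, hC, hw⟩ := h
  exact ⟨_, doobConst_ne_top hs hC, strong_of_weak ρ hs hw⟩

theorem HL.of_strong {ρ : LN Ω} {s : ℝ} (hs : 1 < s) {C : ℝ≥0∞} (hC : C ≠ ∞)
    (h : HLStrong ρ s C) : HL ρ := by
  refine ⟨_, ?_, weak_of_strong ρ hs h⟩
  refine ENNReal.add_ne_top.2 ⟨by simp, ENNReal.mul_ne_top hC ?_⟩
  exact ENNReal.rpow_ne_top_of_nonneg (by linarith) (by simp)

theorem HL.unit : HL LN.unit := ⟨1, by simp, unit_weak⟩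

theorem HL.Lp {X : Type} [MeasurableSpace X] (μ : Measure X) [SigmaFinite μ] {p : ℝ} (hp : 1 < p)
    {ρ : LN Ω} (h : HL ρ) : HL (LN.Lp μ p hp ρ) := by
  obtain ⟨C, hC, hs⟩ := h.strong hp
  refine HL.of_strong hp hC ?_
  intro G f hf L
  have hp0 : 0 < p := by linarith
  have e : ∀ a : ℝ≥0∞, (a ^ (1 / p)) ^ p = a := fun a => by
    rw [← ENNReal.rpow_mul, one_div_mul_cancel hp0.ne', ENNReal.rpow_one]
  simp only [LN.Lp, e]
  have hfx : ∀ x, Measurable (Function.uncurry fun t ω => f t (x, ω)) := fun x =>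
    hf.comp (by fun_prop : Measurable fun a : ℝ × Ω => (a.1, (x, a.2)))
  have hm1 : Measurable fun z : ℝ × X => ρ.N (fun ω => f z.1 (z.2, ω)) ^ p := by
    refine Measurable.pow_const ?_ _
    refine ρ.meas (fun (z : ℝ × X) ω => f z.1 (z.2, ω)) ?_
    exact hf.comp (by fun_prop : Measurable fun a : (ℝ × X) × Ω => (a.1.1, (a.1.2, a.2)))
  have hm2 : Measurable fun z : ℝ × X =>
      ρ.N (fun ω => G.DM L (fun s => f s (z.2, ω)) z.1) ^ p := by
    refine Measurable.pow_const ?_ _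
    refine ρ.meas (fun (z : ℝ × X) ω => G.DM L (fun s => f s (z.2, ω)) z.1) ?_
    have hD := Grid.measurable_DM (G := G) L f hf
    have hc : Measurable fun a : (ℝ × X) × Ω => (a.1.1, (a.1.2, a.2)) := by fun_prop
    have := hD.comp hc
    simpa only [Function.comp_def, Function.uncurry_def] using this
  have s2 := lintegral_lintegral_swap (μ := (volume : Measure ℝ)) (ν := μ)
    (f := fun t x => ρ.N (fun ω => G.DM L (fun s => f s (x, ω)) t) ^ p) hm2.aemeasurable
  have s1 := lintegral_lintegral_swap (μ := (volume : Measure ℝ)) (ν := μ)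
    (f := fun t x => ρ.N (fun ω => f t (x, ω)) ^ p) hm1.aemeasurable
  rw [s1]
  refine s2.trans_le ?_
  rw [← lintegral_const_mul' _ _ hC]
  exact lintegral_mono fun x => hs G (fun t ω => f t (x, ω)) (hfx x) L

theorem Grid.DM_const_mul (G : Grid) (L : ℕ) (c : ℝ≥0∞) (hc : c ≠ ∞) (g : ℝ → ℝ≥0∞) (t : ℝ) :
    G.DM L (fun s => c * g s) t = c * G.DM L g t := by
  unfold Grid.DM
  simp_rw [ENNReal.mul_iSup]
  refine iSup_congr fun n => iSup_congr fun _ => ?_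
  unfold Grid.E
  rw [lintegral_const_mul' _ _ hc]
  ring

theorem HL.comap {Ω' : Type} [MeasurableSpace Ω'] {ρ : LN Ω} (w : Ω → ℝ≥0∞) (hw : Measurable w)
    (φ : Ω → Ω') (hφ : Measurable φ) (hwt : ∀ ω, w ω ≠ ∞) (h : HL ρ) :
    HL (ρ.comap w hw φ hφ hwt) := by
  obtain ⟨C, hC, hs⟩ := h
  refine ⟨C, hC, ?_⟩
  intro G f hf L l hl0 hlt
  have hm : Measurable (Function.uncurry fun t ω => w ω * f t (φ ω)) :=
    (hw.comp measurable_snd).mul (hf.comp (measurable_fst.prodMk (hφ.comp measurable_snd)))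
  have h1 := hs G (fun t ω => w ω * f t (φ ω)) hm L l hl0 hlt
  have e : ∀ t, (fun ω => G.DM L (fun s => w ω * f s (φ ω)) t) =
      fun ω => w ω * G.DM L (fun s => f s (φ ω)) t := fun t => by
    ext ω
    exact G.DM_const_mul L _ (hwt ω) _ t
  simp only [e] at h1
  exact h1

end

section

/-- shift of the dyadic grid -/
def dSh (a : Bool) (k : ℤ) : ℝ := if a then (-1 : ℝ) ^ k / 3 else 0

/-- dyadic index -/
def dIx (a : Bool) (k : ℤ) (x : ℝ) : ℤ := ⌊x / 2 ^ k - dSh a k⌋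

theorem dIx_measurable (a : Bool) (k : ℤ) : Measurable (dIx a k) := by
  unfold dIx
  exact Int.measurable_floor.comp ((measurable_id.div_const _).sub_const _)

theorem dIx_preimage (a : Bool) (k m : ℤ) : dIx a k ⁻¹' {m} =
    Set.Ico ((m + dSh a k) * 2 ^ k) ((m + 1 + dSh a k) * 2 ^ k) := by
  have h2 : (0:ℝ) < 2 ^ k := by positivity
  ext x
  simp only [dIx, Set.mem_preimage, Set.mem_singleton_iff, Int.floor_eq_iff, Set.mem_Ico]
  rw [le_sub_iff_add_le, sub_lt_iff_lt_add, le_div_iff₀ h2, div_lt_iff₀ h2]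

theorem dIx_vol (a : Bool) (k m : ℤ) : volume (dIx a k ⁻¹' {m}) = ENNReal.ofReal (2 ^ k) := by
  rw [dIx_preimage, Real.volume_Ico]
  congr 1
  ring

theorem dIx_succ (a : Bool) (k : ℤ) : ∃ m : ℤ, ∀ x, dIx a (k + 1) x = (dIx a k x + m) / 2 := by
  have key : ∃ m : ℤ, ∀ x : ℝ, x / 2 ^ (k + 1) - dSh a (k + 1) = (x / 2 ^ k - dSh a k + m) / (2:ℕ) := by
    have h2 : (2:ℝ) ^ k ≠ 0 := by positivity
    cases a
    · refine ⟨0, fun x => ?_⟩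
      simp only [dSh, zpow_add_one₀ (two_ne_zero' ℝ)]
      push_cast
      simp
      field_simp
    · have hm : ∃ m : ℤ, (m : ℝ) = (-1 : ℝ) ^ k := by
        rcases Int.even_or_odd k with h | h
        · exact ⟨1, by rw [h.neg_one_zpow]; simp⟩
        · exact ⟨-1, by rw [h.neg_one_zpow]; simp⟩
      obtain ⟨m, hm⟩ := hm
      refine ⟨m, fun x => ?_⟩
      have h1 : (-1:ℝ) ≠ 0 := by norm_num
      simp only [dSh, zpow_add_one₀ (two_ne_zero' ℝ), zpow_add_one₀ h1, ← hm]
      push_cast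
      simp
      field_simp
      ring
  obtain ⟨m, hm⟩ := key
  refine ⟨m, fun x => ?_⟩
  unfold dIx
  rw [hm, Int.floor_div_natCast, Int.floor_add_intCast]
  rfl

/-- concrete grid, top scale N -/
def dGrid (a : Bool) (N : ℕ) : Grid where
  d n := dIx a (N - n)
  v n := ENNReal.ofReal (2 ^ ((N : ℤ) - n))
  meas n := dIx_measurable _ _
  nest n x y h := by
    obtain ⟨m, hm⟩ := dIx_succ a ((N:ℤ) - ((n + 1 : ℕ)))
    have e : (N:ℤ) - ((n + 1 : ℕ)) + 1 = N - n := by push_cast; ring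
    rw [e] at hm
    rw [hm, hm, h]
  vol n m := dIx_vol _ _ _
  v0 n := (ENNReal.ofReal_pos.2 (by positivity)).ne'
  vt n := by simp
  vhalf n := by
    rw [← ENNReal.ofReal_ofNat, ← ENNReal.ofReal_mul (by norm_num)]
    refine ENNReal.ofReal_le_ofReal (le_of_eq ?_)
    rw [← zpow_one_add₀ (by norm_num)]
    congr 1
    push_cast
    ring

/-- dyadic average -/
def dE (a : Bool) (k : ℤ) (g : ℝ → ℝ≥0∞) (t : ℝ) : ℝ≥0∞ :=
  (ENNReal.ofReal (2 ^ k))⁻¹ * ∫⁻ s in dIx a k ⁻¹' {dIx a k t}, g s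

def dMax (a : Bool) (g : ℝ → ℝ≥0∞) (t : ℝ) : ℝ≥0∞ := ⨆ k : ℤ, dE a k g t

/-- dyadic majorant of the maximal function -/
def MD (g : ℝ → ℝ≥0∞) (t : ℝ) : ℝ≥0∞ := 6 * (dMax false g t + dMax true g t)

theorem dMax_eq (a : Bool) (g : ℝ → ℝ≥0∞) (t : ℝ) :
    dMax a g t = ⨆ N : ℕ, (dGrid a N).DM (2 * N + 1) g t := by
  apply le_antisymm
  · refine iSup_le fun k => ?_
    have e : dE a k g t = (dGrid a k.natAbs).E ((k.natAbs : ℤ) - k).toNat g t := by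
      have h : ((((k.natAbs : ℤ) - k).toNat : ℕ) : ℤ) = k.natAbs - k := by omega
      have h2 : ((k.natAbs : ℕ) : ℤ) - ((((k.natAbs : ℤ) - k).toNat : ℕ) : ℤ) = k := by omega
      simp only [dE, Grid.E, Grid.I, dGrid, h2]
    rw [e]
    refine le_iSup_of_le k.natAbs (Grid.E_le_DM ?_ g t)
    omega
  · refine iSup_le fun N => iSup₂_le fun n _ => ?_
    exact le_iSup (fun k => dE a k g t) ((N : ℤ) - n)

theorem dMax_mono_seq (a : Bool) (g : ℝ → ℝ≥0∞) (t : ℝ) :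
    Monotone fun N : ℕ => (dGrid a N).DM (2 * N + 1) g t := by
  intro N M h
  refine iSup₂_le fun n hn => ?_
  refine le_trans (le_of_eq ?_) (Grid.E_le_DM (L := 2 * M + 1) (n := n + (M - N)) (by omega) g t)
  have h2 : (M : ℤ) - ((n + (M - N) : ℕ) : ℤ) = N - n := by omega
  simp only [Grid.E, Grid.I, dGrid, h2]

section
variable {Ω : Type} [MeasurableSpace Ω]

theorem measurable_dMax (a : Bool) (f : ℝ → Ω → ℝ≥0∞) (hf : Measurable (Function.uncurry f)) :
    Measurable (Function.uncurry fun t ω => dMax a (fun s => f s ω) t) := by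
  simp only [dMax_eq]
  exact Measurable.iSup fun N => Grid.measurable_DM _ f hf

theorem measurable_MD (f : ℝ → Ω → ℝ≥0∞) (hf : Measurable (Function.uncurry f)) :
    Measurable (Function.uncurry fun t ω => MD (fun s => f s ω) t) := by
  unfold MD
  exact ((measurable_dMax false f hf).add (measurable_dMax true f hf)).const_mul _

theorem HL.MD_strong {ρ : LN Ω} (h : HL ρ) {q : ℝ} (hq : 1 < q) :
    ∃ C : ℝ≥0∞, C ≠ ∞ ∧ ∀ f : ℝ → Ω → ℝ≥0∞, Measurable (Function.uncurry f) →
      (∫⁻ t, ρ.N (fun ω => MD (fun s => f s ω) t) ^ q) ^ (1 / q) ≤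
        C * (∫⁻ t, ρ.N (f t) ^ q) ^ (1 / q) := by
  obtain ⟨C, hC, hs⟩ := h.strong hq
  have hq0 : 0 < 1 / q := by positivity
  refine ⟨6 * (C ^ (1 / q) + C ^ (1 / q)), ?_, fun f hf => ?_⟩
  · have := ENNReal.rpow_ne_top_of_nonneg hq0.le hC
    exact ENNReal.mul_ne_top (by simp) (ENNReal.add_ne_top.2 ⟨this, this⟩)
  let P := LN.Lp (volume : Measure ℝ) q hq ρ
  have h1 : ∀ a, P.N (fun z => dMax a (fun s => f s z.2) z.1) ≤
      C ^ (1 / q) * (∫⁻ t, ρ.N (f t) ^ q) ^ (1 / q) := by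
    intro a
    have := P.mct (fun N z => (dGrid a N).DM (2 * N + 1) (fun s => f s z.2) z.1)
      (fun N => Grid.measurable_DM _ f hf) (fun N M hNM z => dMax_mono_seq a _ _ hNM)
    simp only [dMax_eq]
    refine this.trans (iSup_le fun N => ?_)
    rw [← ENNReal.mul_rpow_of_nonneg _ _ hq0.le]
    exact ENNReal.rpow_le_rpow (hs _ f hf _) hq0.le
  have h2 : P.N (fun z => MD (fun s => f s z.2) z.1) ≤
      6 * (P.N (fun z => dMax false (fun s => f s z.2) z.1) +
        P.N (fun z => dMax true (fun s => f s z.2) z.1)) := by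
    unfold MD
    rw [P.smul _ _ (by simp)]
    gcongr
    exact P.add_le _ _ (measurable_dMax false f hf) (measurable_dMax true f hf)
  refine h2.trans ?_
  rw [mul_assoc, add_mul]
  gcongr
  · exact h1 _
  · exact h1 _
end

theorem exists_dIx (x r : ℝ) (hr : 0 < r) : ∃ (a : Bool) (k : ℤ), (2:ℝ) ^ k ≤ 12 * r ∧
    ∀ s ∈ Set.Ioo (x - r) (x + r), dIx a k s = dIx a k x := by
  obtain ⟨n, hn1, hn2⟩ := exists_mem_Ico_zpow (x := 6 * r) (y := (2:ℝ)) (by positivity) (by norm_num)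
  have hk : (2:ℝ) ^ (n + 1) ≤ 12 * r := by
    rw [zpow_add_one₀ (by norm_num)]; linarith
  set k := n + 1
  have h2 : (0:ℝ) < 2 ^ k := by positivity
  set u := x / 2 ^ k with hu
  have hs : ∀ s ∈ Set.Ioo (x - r) (x + r), |s / 2 ^ k - u| < 1 / 6 := by
    intro s hs
    rw [hu, ← sub_div, abs_div, abs_of_pos h2, div_lt_iff₀ h2]
    have : |s - x| < r := by rw [abs_lt]; constructor <;> linarith [hs.1, hs.2]
    linarith
  have hx : x ∈ Set.Ioo (x - r) (x + r) := by constructor <;> linarith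
  have hround := abs_sub_round u
  set m := round u
  rw [abs_le] at hround
  suffices h : ∃ (a : Bool) (m' : ℤ), ∀ s ∈ Set.Ioo (x - r) (x + r), dIx a k s = m' by
    obtain ⟨a, m', h⟩ := h
    exact ⟨a, k, hk, fun s hs => by rw [h s hs, h x hx]⟩
  by_cases h1 : u - m < - (1 / 6)
  · refine ⟨false, m - 1, fun s h => ?_⟩
    have := abs_lt.1 (hs s h)
    rw [dIx, Int.floor_eq_iff]
    simp only [dSh]
    push_cast
    constructor <;> simp <;> linarith
  by_cases h2 : 1 / 6 < u - m
  · refine ⟨false, m, fun s h => ?_⟩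
    have := abs_lt.1 (hs s h)
    rw [dIx, Int.floor_eq_iff]
    simp only [dSh]
    constructor <;> simp <;> linarith
  rcases Int.even_or_odd k with he | he
  · refine ⟨true, m - 1, fun s h => ?_⟩
    have := abs_lt.1 (hs s h)
    rw [dIx, Int.floor_eq_iff]
    simp only [dSh, he.neg_one_zpow]
    push_cast
    constructor <;> simp <;> linarith
  · refine ⟨true, m, fun s h => ?_⟩
    have := abs_lt.1 (hs s h)
    rw [dIx, Int.floor_eq_iff]
    simp only [dSh, he.neg_one_zpow]
    constructor <;> simp <;> linarith

theorem avg_le_MD (g : ℝ → ℝ≥0∞) (x r : ℝ) (hr : 0 < r) :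
    (ENNReal.ofReal (2 * r))⁻¹ * ∫⁻ s in Set.Ioo (x - r) (x + r), g s ≤ MD g x := by
  obtain ⟨a, k, hk, h⟩ := exists_dIx x r hr
  have h1 : (ENNReal.ofReal (2 * r))⁻¹ ≤ 6 * (ENNReal.ofReal (2 ^ k))⁻¹ := by
    have h2 : (0:ℝ) < 2 ^ k := by positivity
    rw [← ENNReal.ofReal_inv_of_pos (by positivity), ← ENNReal.ofReal_inv_of_pos h2,
      ← ENNReal.ofReal_ofNat, ← ENNReal.ofReal_mul (by norm_num)]
    apply ENNReal.ofReal_le_ofReal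
    rw [← div_eq_mul_inv, inv_eq_one_div, div_le_div_iff₀ (by positivity) h2]
    simp
    linarith
  have h3 : dE a k g x ≤ dMax false g x + dMax true g x := by
    have : dE a k g x ≤ dMax a g x := le_iSup (fun k => dE a k g x) k
    cases a
    · exact this.trans le_self_add
    · exact this.trans le_add_self
  calc _ ≤ 6 * (ENNReal.ofReal (2 ^ k))⁻¹ * ∫⁻ s in dIx a k ⁻¹' {dIx a k x}, g s := by
        gcongr
        exact h
    _ = 6 * dE a k g x := by rw [dE, mul_assoc]
    _ ≤ _ := by unfold MD; gcongr

theorem dE_tsum {ι : Type} [Countable ι] (a : Bool) (k : ℤ) (g : ι → ℝ → ℝ≥0∞)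
    (hg : ∀ i, Measurable (g i)) (t : ℝ) :
    dE a k (fun s => ∑' i, g i s) t = ∑' i, dE a k (g i) t := by
  unfold dE
  rw [lintegral_tsum fun i => (hg i).aemeasurable, ENNReal.tsum_mul_left]

theorem MD_tsum_le {ι : Type} [Countable ι] (g : ι → ℝ → ℝ≥0∞)
    (hg : ∀ i, Measurable (g i)) (t : ℝ) :
    MD (fun s => ∑' i, g i s) t ≤ ∑' i, MD (g i) t := by
  unfold MD
  rw [ENNReal.tsum_mul_left, ENNReal.tsum_add]
  have : ∀ a, dMax a (fun s => ∑' i, g i s) t ≤ ∑' i, dMax a (g i) t := fun a => by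
    refine iSup_le fun k => ?_
    rw [dE_tsum a k g hg]
    exact ENNReal.tsum_le_tsum fun i => le_iSup (fun k => dE a k (g i) t) k
  gcongr <;> exact this _

theorem MD_congr_ae {g g' : ℝ → ℝ≥0∞} (h : g =ᵐ[volume] g') (t : ℝ) : MD g t = MD g' t := by
  have : ∀ a k, dE a k g t = dE a k g' t := fun a k => by
    unfold dE
    rw [lintegral_congr_ae (ae_restrict_of_ae h)]
  simp only [MD, dMax, this]

theorem MD_mono {g g' : ℝ → ℝ≥0∞} (h : ∀ s, g s ≤ g' s) (t : ℝ) : MD g t ≤ MD g' t := by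
  have : ∀ a k, dE a k g t ≤ dE a k g' t := fun a k => by
    unfold dE
    gcongr
    exact h _
  unfold MD
  gcongr <;> exact iSup_mono fun k => this _ k

theorem MD_const_mul (c : ℝ≥0∞) (hc : c ≠ ∞) (g : ℝ → ℝ≥0∞) (t : ℝ) :
    MD (fun s => c * g s) t = c * MD g t := by
  have : ∀ a k, dE a k (fun s => c * g s) t = c * dE a k g t := fun a k => by
    unfold dE
    rw [lintegral_const_mul' _ _ hc]
    ring
  simp only [MD, dMax, this, ← ENNReal.mul_iSup]
  ring

theorem dIx_eq_dist {a : Bool} {k : ℤ} {x y : ℝ} (h : dIx a k x = dIx a k y) : |x - y| < 2 ^ k := by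
  have := Int.abs_sub_lt_one_of_floor_eq_floor h
  have h2 : (0:ℝ) < 2 ^ k := by positivity
  rw [sub_sub_sub_cancel_right, ← sub_div, abs_div, abs_of_pos h2, div_lt_one h2] at this
  exact this

/-- far estimate -/
theorem MD_far {g : ℝ → ℝ≥0∞} {S : Set ℝ} (hS : MeasurableSet S) {x c : ℝ} (hc : 0 < c)
    (h : ∀ s ∈ S, c ≤ |s - x|) :
    MD (S.indicator g) x ≤ 12 * (ENNReal.ofReal c)⁻¹ * ∫⁻ s in S, g s := by
  have : ∀ a k, dE a k (S.indicator g) x ≤ (ENNReal.ofReal c)⁻¹ * ∫⁻ s in S, g s := fun a k => by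
    unfold dE
    rw [setLIntegral_indicator hS]
    by_cases hne : (S ∩ dIx a k ⁻¹' {dIx a k x}).Nonempty
    · obtain ⟨s, hs, hs2⟩ := hne
      have h1 := (h s hs).trans (dIx_eq_dist hs2).le
      have := ENNReal.ofReal_le_ofReal h1
      gcongr
      exact Set.inter_subset_left
    · rw [Set.not_nonempty_iff_eq_empty.1 hne]
      simp
  have h2 : ∀ a, dMax a (S.indicator g) x ≤ (ENNReal.ofReal c)⁻¹ * ∫⁻ s in S, g s := fun a =>
    iSup_le fun k => this a k
  unfold MD
  calc _ ≤ 6 * ((ENNReal.ofReal c)⁻¹ * (∫⁻ s in S, g s) + (ENNReal.ofReal c)⁻¹ * ∫⁻ s in S, g s) := by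
        gcongr <;> exact h2 _
    _ = _ := by ring

end

section

/-- powers of two -/
def w2 (r : ℝ) : ℝ≥0∞ := ENNReal.ofReal ((2:ℝ) ^ r)

theorem w2_add (r s : ℝ) : w2 (r + s) = w2 r * w2 s := by
  unfold w2
  rw [← ENNReal.ofReal_mul (by positivity), Real.rpow_add (by norm_num)]

theorem w2_ne_top (r : ℝ) : w2 r ≠ ∞ := by simp [w2]

theorem w2_mono {r s : ℝ} (h : r ≤ s) : w2 r ≤ w2 s := by
  unfold w2
  exact ENNReal.ofReal_le_ofReal (Real.rpow_le_rpow_of_exponent_le (by norm_num) h)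

theorem w2_zero : w2 0 = 1 := by simp [w2]

theorem w2_pow (r s : ℝ) : w2 r ^ s = w2 (r * s) := by
  unfold w2
  rw [ENNReal.ofReal_rpow_of_pos (by positivity), ← Real.rpow_mul (by norm_num)]

theorem w2_inv (r : ℝ) : (w2 r)⁻¹ = w2 (-r) := by
  unfold w2
  rw [← ENNReal.ofReal_inv_of_pos (by positivity), Real.rpow_neg (by norm_num)]

theorem w2_int (k : ℤ) : w2 k = ENNReal.ofReal ((2:ℝ) ^ k) := by
  unfold w2
  rw [Real.rpow_intCast]

theorem w2_sum {δ : ℝ} (hδ : 0 < δ) : ∑' m : ℤ, w2 (-δ * |(m:ℝ)|) ≠ ∞ := by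
  unfold w2
  have hs : Summable fun m : ℤ => (2:ℝ) ^ (-δ * |(m:ℝ)|) := by
    have hn : Summable fun n : ℕ => (2:ℝ) ^ (-δ * |((n:ℤ):ℝ)|) := by
      have : (fun n : ℕ => (2:ℝ) ^ (-δ * |((n:ℤ):ℝ)|)) = fun n : ℕ => ((2:ℝ) ^ (-δ)) ^ n := by
        ext n
        rw [Real.rpow_mul (by norm_num), ← Real.rpow_natCast]
        simp
      rw [this]
      refine summable_geometric_of_lt_one (by positivity) ?_
      exact Real.rpow_lt_one_of_one_lt_of_neg (by norm_num) (by linarith)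
    refine Summable.of_nat_of_neg hn ?_
    simpa using hn
  exact hs.tsum_ofReal_ne_top

theorem MD_mono_ae {g g' : ℝ → ℝ≥0∞} (h : ∀ᵐ s ∂(volume : Measure ℝ), g s ≤ g' s) (t : ℝ) :
    MD g t ≤ MD g' t := by
  have : ∀ a k, dE a k g t ≤ dE a k g' t := fun a k => by
    unfold dE
    exact mul_le_mul_right (lintegral_mono_ae (ae_restrict_of_ae h)) _
  unfold MD
  exact mul_le_mul_right (add_le_add (iSup_mono fun k => this _ k) (iSup_mono fun k => this _ k)) _

theorem herzRing_meas (k : ℤ) : MeasurableSet (herzRing k) :=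
  measurableSet_Ioo.diff measurableSet_Ioo

theorem mem_herzRing {k : ℤ} {x : ℝ} : x ∈ herzRing k ↔ (2:ℝ) ^ (k - 1) ≤ |x| ∧ |x| < 2 ^ k := by
  unfold herzRing
  rw [Set.mem_sdiff, Set.mem_Ioo, Set.mem_Ioo, ← abs_lt, ← abs_lt, not_lt, and_comm]

theorem exists_herzRing {x : ℝ} (hx : x ≠ 0) : ∃ k, x ∈ herzRing k := by
  obtain ⟨n, h1, h2⟩ := exists_mem_Ico_zpow (abs_pos.2 hx) (one_lt_two : (1:ℝ) < 2)
  exact ⟨n + 1, mem_herzRing.2 ⟨by simpa using h1, h2⟩⟩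

theorem herzRing_vol (k : ℤ) : volume (herzRing k) ≤ w2 (k + 1) := by
  refine (measure_mono (Set.sdiff_subset)).trans ?_
  rw [Real.volume_Ioo, w2]
  apply ENNReal.ofReal_le_ofReal
  rw [Real.rpow_add_one (by norm_num), Real.rpow_intCast]
  linarith

theorem herz_dist {k l : ℤ} (h : 2 ≤ |k - l|) {x s : ℝ} (hx : x ∈ herzRing k) (hs : s ∈ herzRing l) :
    (2:ℝ) ^ (max k l - 2) ≤ |s - x| := by
  rw [mem_herzRing] at hx hs
  have key : ∀ m j : ℤ, j + 2 ≤ m → (2:ℝ) ^ (m - 2) ≤ 2 ^ (m - 1) - 2 ^ j := by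
    intro m j hj
    have h1 : (2:ℝ) ^ j ≤ 2 ^ (m - 2) := zpow_le_zpow_right₀ (by norm_num) (by omega)
    have h2 : (2:ℝ) ^ (m - 1) = 2 ^ (m - 2) * 2 := by
      rw [← zpow_add_one₀ (by norm_num)]; congr 1; ring
    linarith
  have h1 := abs_sub_abs_le_abs_sub s x
  have h2 := abs_sub_abs_le_abs_sub x s
  rw [abs_sub_comm x s] at h2
  rcases le_total l k with hlk | hlk
  · rw [max_eq_left hlk]
    rw [abs_of_nonneg (by omega)] at h
    have := key k l (by omega)
    linarith
  · rw [max_eq_right hlk]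
    rw [abs_of_nonpos (by omega)] at h
    have := key l k (by omega)
    linarith

theorem young_Z {p : ℝ} (hp : 1 < p) (κ a : ℤ → ℝ≥0∞) :
    (∑' k : ℤ, (∑' l : ℤ, κ (k - l) * a l) ^ p) ^ (1 / p) ≤
      (∑' m, κ m) * (∑' k : ℤ, a k ^ p) ^ (1 / p) := by
  have hp0 : 0 < p := by linarith
  have e : ∀ k, ∑' l : ℤ, κ (k - l) * a l = ∑' m : ℤ, κ m * a (k - m) := fun k => by
    rw [← (Equiv.subLeft k).tsum_eq]
    simp [Equiv.subLeft]
  simp_rw [e]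
  have h := (LN.Lp (Measure.count : Measure ℤ) p hp LN.unit).tsum_le
    (fun (m : ℤ) z => κ m * a (z.1 - m)) (fun m => by
      refine Measurable.const_mul ?_ _
      exact (measurable_of_countable (fun z : ℤ => a (z - m))).comp measurable_fst)
  simp only [LN.Lp, LN.unit, lintegral_count] at h
  refine h.trans ?_
  rw [← ENNReal.tsum_mul_right]
  refine ENNReal.tsum_le_tsum fun m => le_of_eq ?_
  simp_rw [ENNReal.mul_rpow_of_nonneg _ _ hp0.le]
  rw [ENNReal.tsum_mul_left, ENNReal.mul_rpow_of_nonneg _ _ (by positivity), ← ENNReal.rpow_mul,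
    mul_one_div_cancel hp0.ne', ENNReal.rpow_one]
  congr 2
  exact (Equiv.subRight m).tsum_eq (fun k => a k ^ p)

section
variable {Ω : Type} [MeasurableSpace Ω]

/-- local norm -/
def AN (q : ℝ) (k : ℤ) (g : ℝ → ℝ≥0∞) : ℝ≥0∞ := (∫⁻ x in herzRing k, g x ^ q) ^ (1 / q)

theorem AN_mono {q : ℝ} (hq : 1 < q) {k : ℤ} {g g' : ℝ → ℝ≥0∞} (h : ∀ x ∈ herzRing k, g x ≤ g' x) :
    AN q k g ≤ AN q k g' := by
  refine ENNReal.rpow_le_rpow (setLIntegral_mono' (herzRing_meas k) fun x hx => ?_) (by positivity)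
  exact ENNReal.rpow_le_rpow (h x hx) (by linarith)

theorem AN_const {q : ℝ} (hq : 1 < q) (k : ℤ) (c : ℝ≥0∞) : AN q k (fun _ => c) ≤ c * w2 ((k + 1) / q) := by
  have hq0 : 0 < q := by linarith
  unfold AN
  rw [setLIntegral_const, ENNReal.mul_rpow_of_nonneg _ _ (by positivity), ← ENNReal.rpow_mul,
    mul_one_div_cancel hq0.ne', ENNReal.rpow_one, div_eq_mul_one_div ((k:ℝ) + 1) q, ← w2_pow]
  gcongr
  exact herzRing_vol k

theorem AN_holder {q : ℝ} (hq : 1 < q) (l : ℤ) (g : ℝ → ℝ≥0∞) (hg : Measurable g) :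
    ∫⁻ x in herzRing l, g x ≤ AN q l g * w2 ((l + 1) * (1 - 1 / q)) := by
  have hq0 : 0 < q := by linarith
  have hpq : q.HolderConjugate (q / (q - 1)) := Real.HolderConjugate.conjExponent hq
  have e1 : 1 / (q / (q - 1)) = 1 - 1 / q := by field_simp
  have := ENNReal.lintegral_mul_le_Lp_mul_Lq (volume.restrict (herzRing l)) hpq
      hg.aemeasurable (measurable_const (a := (1:ℝ≥0∞))).aemeasurable
  simp only [Pi.mul_apply, mul_one, ENNReal.one_rpow, lintegral_one, Measure.restrict_apply_univ] at this
  rw [e1] at this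
  refine this.trans ?_
  unfold AN
  rw [← w2_pow]
  have h1 : 0 ≤ 1 - 1 / q := by
    have : 1 / q < 1 := by rw [div_lt_one hq0]; exact hq
    linarith
  gcongr
  exact herzRing_vol l

theorem HL.herz_local {ρ : LN Ω} (h : HL ρ) {q α : ℝ} (hq : 1 < q)
    {δ : ℝ} (hδ0 : 0 < δ) (hδ1 : δ ≤ α + 1 / q) (hδ2 : δ ≤ 1 - 1 / q - α) :
    ∃ K : ℝ≥0∞, K ≠ ∞ ∧ ∀ f : ℝ → Ω → ℝ≥0∞, Measurable (Function.uncurry f) → ∀ k l : ℤ,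
      w2 (k * α) * AN q k (fun t => ρ.N (fun ω => MD ((herzRing l).indicator (fun s => f s ω)) t)) ≤
        K * w2 (-δ * |((k - l : ℤ) : ℝ)|) * (w2 (l * α) * AN q l (fun t => ρ.N (f t))) := by
  obtain ⟨C, hC, hs⟩ := h.MD_strong hq
  have hq0 : 0 < q := by linarith
  refine ⟨96 + C * w2 (|α| + δ), ENNReal.add_ne_top.2 ⟨by simp, ENNReal.mul_ne_top hC (w2_ne_top _)⟩,
    fun f hf k l => ?_⟩
  have hρm : Measurable fun t => ρ.N (f t) := ρ.meas f hf
  by_cases hkl : 2 ≤ |k - l|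
  · set c : ℝ := (2:ℝ) ^ (max k l - 2) with hc
    have hcw : ENNReal.ofReal c = w2 ((max k l : ℤ) - 2) := by
      rw [hc, ← w2_int]; push_cast; rfl
    have pt : ∀ x ∈ herzRing k,
        ρ.N (fun ω => MD ((herzRing l).indicator (fun s => f s ω)) x) ≤
          12 * (ENNReal.ofReal c)⁻¹ * ∫⁻ s in herzRing l, ρ.N (f s) := by
      intro x hx
      have h1 : ρ.N (fun ω => MD ((herzRing l).indicator (fun s => f s ω)) x) ≤
          ρ.N (fun ω => 12 * (ENNReal.ofReal c)⁻¹ * ∫⁻ s in herzRing l, f s ω) :=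
        ρ.mono fun ω => MD_far (herzRing_meas l) (by positivity) fun s hs => herz_dist hkl hx hs
      refine h1.trans ?_
      rw [ρ.smul _ _ (ENNReal.mul_ne_top (by simp)
        (ENNReal.inv_ne_top.2 (ENNReal.ofReal_pos.2 (by positivity)).ne'))]
      gcongr
      exact ρ.mink _ f hf
    have h1 := (AN_mono hq pt).trans (AN_const hq k _)
    have h2 := AN_holder hq l _ hρm
    have hexp : k * α + ((2 - (max k l : ℤ)) + (l + 1) * (1 - 1 / q) + (k + 1) / q) ≤
        3 + (-δ * |((k - l : ℤ) : ℝ)| + l * α) := by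
      push_cast
      rcases le_total (l:ℝ) k with hh | hh
      · rw [max_eq_left hh, abs_of_nonneg (by linarith)]
        have := mul_le_mul_of_nonneg_right hδ2 (by linarith : (0:ℝ) ≤ k - l)
        have e : ((k:ℝ) + 1) / q = (k + 1) * (1 / q) := by ring
        rw [e]
        linarith
      · rw [max_eq_right hh, abs_of_nonpos (by linarith)]
        have := mul_le_mul_of_nonneg_right hδ1 (by linarith : (0:ℝ) ≤ l - k)
        have e : ((k:ℝ) + 1) / q = (k + 1) * (1 / q) := by ring
        rw [e]
        linarith
    have h8 : w2 3 = 8 := by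
      unfold w2; norm_num
    calc _ ≤ w2 (k * α) * (12 * (ENNReal.ofReal c)⁻¹ * (AN q l (fun t => ρ.N (f t)) *
            w2 ((l + 1) * (1 - 1 / q))) * w2 ((k + 1) / q)) := by
          refine mul_le_mul_right (h1.trans ?_) _
          gcongr
      _ = 12 * w2 (k * α + ((2 - (max k l : ℤ)) + (l + 1) * (1 - 1 / q) + (k + 1) / q)) *
            AN q l (fun t => ρ.N (f t)) := by
          rw [hcw, w2_inv, w2_add, w2_add, w2_add, neg_sub]
          ring
      _ ≤ 12 * w2 (3 + (-δ * |((k - l : ℤ) : ℝ)| + l * α)) * AN q l (fun t => ρ.N (f t)) := by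
          gcongr
          exact w2_mono hexp
      _ = 96 * w2 (-δ * |((k - l : ℤ) : ℝ)|) * (w2 (l * α) * AN q l (fun t => ρ.N (f t))) := by
          rw [w2_add, w2_add, h8]
          ring
      _ ≤ _ := by
          gcongr
          exact le_self_add
  · have hfm : Measurable (Function.uncurry fun t ω => (herzRing l).indicator (fun s => f s ω) t) := by
      have : (Function.uncurry fun t ω => (herzRing l).indicator (fun s => f s ω) t) =
          (Prod.fst ⁻¹' (herzRing l)).indicator (Function.uncurry f) := by
        ext ⟨t, ω⟩
        by_cases ht : t ∈ herzRing l
        · have h2 : (t, ω) ∈ Prod.fst ⁻¹' (herzRing l) := ht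
          rw [Set.indicator_of_mem h2]
          exact Set.indicator_of_mem ht (fun s => f s ω)
        · have h2 : (t, ω) ∉ Prod.fst ⁻¹' (herzRing l) := ht
          rw [Set.indicator_of_notMem h2]
          exact Set.indicator_of_notMem ht (fun s => f s ω)
      rw [this]
      exact hf.indicator (measurable_fst (herzRing_meas l))
    have h1 := hs _ hfm
    have e1 : (∫⁻ t, ρ.N (fun ω => (herzRing l).indicator (fun s => f s ω) t) ^ q) =
        ∫⁻ t in herzRing l, ρ.N (f t) ^ q := by
      rw [← lintegral_indicator (herzRing_meas l)]
      congr 1; ext t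
      by_cases ht : t ∈ herzRing l
      · simp [ht]
      · simp [ht, ρ.N_zero, hq0]
    rw [e1] at h1
    have h2 : AN q k (fun t => ρ.N (fun ω => MD ((herzRing l).indicator (fun s => f s ω)) t)) ≤
        C * AN q l (fun t => ρ.N (f t)) := by
      refine le_trans ?_ h1
      exact ENNReal.rpow_le_rpow (setLIntegral_le_lintegral _ _) (by positivity)
    have hle : |((k - l : ℤ) : ℝ)| ≤ 1 := by
      have : |k - l| ≤ 1 := by omega
      exact_mod_cast this
    have hexp : (k:ℝ) * α ≤ (|α| + δ) + (-δ * |((k - l : ℤ) : ℝ)| + l * α) := by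
      have h3 : ((k - l : ℤ) : ℝ) * α ≤ |α| := by
        calc _ ≤ |((k - l : ℤ) : ℝ) * α| := le_abs_self _
          _ = |((k - l : ℤ) : ℝ)| * |α| := abs_mul _ _
          _ ≤ 1 * |α| := by gcongr
          _ = |α| := one_mul _
      have h4 : δ * |((k - l : ℤ) : ℝ)| ≤ δ * 1 := by gcongr
      push_cast at h3 h4 ⊢
      linarith
    calc _ ≤ w2 ((|α| + δ) + (-δ * |((k - l : ℤ) : ℝ)| + l * α)) *
            (C * AN q l (fun t => ρ.N (f t))) := by
          gcongr
          exact w2_mono hexp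
      _ = C * w2 (|α| + δ) * w2 (-δ * |((k - l : ℤ) : ℝ)|) *
            (w2 (l * α) * AN q l (fun t => ρ.N (f t))) := by
          rw [w2_add (|α| + δ), w2_add (_ * _)]; ring
      _ ≤ _ := by
          gcongr
          exact le_add_self

theorem herzNorm1_eq {α p q : ℝ} (hp : 1 < p) (hq : 1 < q) (g : ℝ → ℝ≥0∞) :
    herzNorm1 α (ENNReal.ofReal p) (ENNReal.ofReal q) g =
      (∑' k : ℤ, (w2 (k * α) * AN q k g) ^ p) ^ (1 / p) := by
  unfold herzNorm1 lpZNorm lqNormOn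
  simp only [ENNReal.ofReal_ne_top, if_false, ENNReal.toReal_ofReal (by linarith : 0 ≤ p),
    ENNReal.toReal_ofReal (by linarith : 0 ≤ q)]
  rfl

theorem AN_tsum_le (ρ : LN Ω) {q : ℝ} (hq : 1 < q) (k : ℤ) (F : ℝ → Ω → ℝ≥0∞)
    (g : ℤ → ℝ → Ω → ℝ≥0∞) (hg : ∀ l, Measurable (Function.uncurry (g l)))
    (hF : ∀ t ω, F t ω ≤ ∑' l, g l t ω) :
    AN q k (fun t => ρ.N (F t)) ≤ ∑' l, AN q k (fun t => ρ.N (g l t)) := by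
  have h1 : AN q k (fun t => ρ.N (F t)) ≤ AN q k (fun t => ρ.N (fun ω => ∑' l, g l t ω)) :=
    AN_mono hq fun t _ => ρ.mono fun ω => hF t ω
  refine h1.trans ?_
  exact (LN.Lp (volume.restrict (herzRing k)) q hq ρ).tsum_le (fun l z => g l z.1 z.2) hg

theorem HL.herz {ρ : LN Ω} (h : HL ρ) {p q α : ℝ} (hp : 1 < p) (hq : 1 < q)
    (hα1 : -(1 / q) < α) (hα2 : α < 1 - 1 / q) :
    ∃ C : ℝ≥0∞, C ≠ ∞ ∧ ∀ f : ℝ → Ω → ℝ≥0∞, Measurable (Function.uncurry f) →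
      herzNorm1 α (ENNReal.ofReal p) (ENNReal.ofReal q)
          (fun t => ρ.N (fun ω => MD (fun s => f s ω) t)) ≤
        C * herzNorm1 α (ENNReal.ofReal p) (ENNReal.ofReal q) (fun t => ρ.N (f t)) := by
  obtain ⟨δ, hδ0, hδ1, hδ2⟩ : ∃ δ : ℝ, 0 < δ ∧ δ ≤ α + 1 / q ∧ δ ≤ 1 - 1 / q - α :=
    ⟨min (α + 1 / q) (1 - 1 / q - α), lt_min (by linarith) (by linarith),
      min_le_left _ _, min_le_right _ _⟩
  obtain ⟨K, hK, hloc⟩ := h.herz_local hq hδ0 hδ1 hδ2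
  refine ⟨∑' m : ℤ, K * w2 (-δ * |(m:ℝ)|), ?_, fun f hf => ?_⟩
  · rw [ENNReal.tsum_mul_left]
    exact ENNReal.mul_ne_top hK (w2_sum hδ0)
  rw [herzNorm1_eq hp hq, herzNorm1_eq hp hq]
  refine le_trans ?_ (young_Z hp (fun m => K * w2 (-δ * |(m:ℝ)|))
    (fun l => w2 (l * α) * AN q l (fun t => ρ.N (f t))))
  refine ENNReal.rpow_le_rpow (ENNReal.tsum_le_tsum fun k => ?_) (by positivity)
  refine ENNReal.rpow_le_rpow ?_ (by linarith)
  refine le_trans ?_ (ENNReal.tsum_le_tsum fun l => hloc f hf k l)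
  rw [ENNReal.tsum_mul_left]
  gcongr
  have hfm : ∀ l, Measurable (Function.uncurry fun t ω => (herzRing l).indicator (fun s => f s ω) t) := by
    intro l
    have : (Function.uncurry fun t ω => (herzRing l).indicator (fun s => f s ω) t) =
        (Prod.fst ⁻¹' (herzRing l)).indicator (Function.uncurry f) := by
      ext ⟨t, ω⟩
      by_cases ht : t ∈ herzRing l
      · have h2 : (t, ω) ∈ Prod.fst ⁻¹' (herzRing l) := ht
        rw [Set.indicator_of_mem h2]
        exact Set.indicator_of_mem ht (fun s => f s ω)
      · have h2 : (t, ω) ∉ Prod.fst ⁻¹' (herzRing l) := ht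
        rw [Set.indicator_of_notMem h2]
        exact Set.indicator_of_notMem ht (fun s => f s ω)
    rw [this]
    exact hf.indicator (measurable_fst (herzRing_meas l))
  refine AN_tsum_le ρ hq k _ (fun l t ω => MD ((herzRing l).indicator (fun s => f s ω)) t)
    (fun l => measurable_MD _ (hfm l)) fun t ω => ?_
  refine le_trans ?_ (MD_tsum_le (fun l => (herzRing l).indicator (fun s => f s ω))
    (fun l => (hf.of_uncurry_right (y := ω)).indicator (herzRing_meas l)) t)
  refine MD_mono_ae ?_ _
  have h0 : ∀ᵐ s ∂(volume : Measure ℝ), s ≠ 0 := by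
    simp [ae_iff]
  filter_upwards [h0] with s hs
  obtain ⟨l, hl⟩ := exists_herzRing hs
  refine le_trans (le_of_eq ?_) (ENNReal.le_tsum l)
  rw [Set.indicator_of_mem hl]
end

end

section

theorem herzNorm1_mono {α p q : ℝ} (hp : 1 < p) (hq : 1 < q) {g g' : ℝ → ℝ≥0∞} (h : ∀ t, g t ≤ g' t) :
    herzNorm1 α (ENNReal.ofReal p) (ENNReal.ofReal q) g ≤
      herzNorm1 α (ENNReal.ofReal p) (ENNReal.ofReal q) g' := by
  rw [herzNorm1_eq hp hq, herzNorm1_eq hp hq]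
  refine ENNReal.rpow_le_rpow (ENNReal.tsum_le_tsum fun k => ?_) (by positivity)
  refine ENNReal.rpow_le_rpow ?_ (by linarith)
  gcongr
  exact AN_mono hq fun x _ => h x

theorem AN_smul {q : ℝ} (hq : 1 < q) (k : ℤ) (c : ℝ≥0∞) (hc : c ≠ ∞) (g : ℝ → ℝ≥0∞) :
    AN q k (fun t => c * g t) = c * AN q k g := by
  have hq0 : 0 < q := by linarith
  unfold AN
  simp_rw [ENNReal.mul_rpow_of_nonneg _ _ hq0.le]
  rw [lintegral_const_mul' _ _ (ENNReal.rpow_ne_top_of_nonneg hq0.le hc),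
    ENNReal.mul_rpow_of_nonneg _ _ (by positivity), ← ENNReal.rpow_mul,
    mul_one_div_cancel hq0.ne', ENNReal.rpow_one]

theorem herzNorm1_smul {α p q : ℝ} (hp : 1 < p) (hq : 1 < q) (c : ℝ≥0∞) (hc : c ≠ ∞) (g : ℝ → ℝ≥0∞) :
    herzNorm1 α (ENNReal.ofReal p) (ENNReal.ofReal q) (fun t => c * g t) =
      c * herzNorm1 α (ENNReal.ofReal p) (ENNReal.ofReal q) g := by
  have hp0 : 0 < p := by linarith
  rw [herzNorm1_eq hp hq, herzNorm1_eq hp hq]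
  simp_rw [AN_smul hq _ c hc, mul_left_comm _ c, ENNReal.mul_rpow_of_nonneg _ _ hp0.le]
  rw [ENNReal.tsum_mul_left,
    ENNReal.mul_rpow_of_nonneg _ _ (by positivity), ← ENNReal.rpow_mul,
    mul_one_div_cancel hp0.ne', ENNReal.rpow_one]

section
variable {Ω Ω' : Type} [MeasurableSpace Ω] [MeasurableSpace Ω']

/-- weight -/
def hW (α : ℝ) (z : ℤ × (ℝ × Ω)) : ℝ≥0∞ := (herzRing z.1).indicator (fun _ => w2 (z.1 * α)) z.2.1

theorem hW_meas (α : ℝ) : Measurable (hW (Ω := Ω) α) := by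
  refine measurable_from_prod_countable_right fun k => ?_
  have : Measurable ((herzRing k).indicator (fun _ : ℝ => w2 (k * α))) :=
    measurable_const.indicator (herzRing_meas k)
  exact this.comp measurable_fst

theorem hW_ne_top (α : ℝ) (z : ℤ × (ℝ × Ω)) : hW α z ≠ ∞ := by
  unfold hW
  by_cases h : z.2.1 ∈ herzRing z.1
  · simp [h, w2_ne_top]
  · simp [h]

/-- Herz lattice norm -/
def LN.herz (ρ : LN Ω) (α p q : ℝ) (hp : 1 < p) (hq : 1 < q) (φ : ℝ × Ω → Ω') (hφ : Measurable φ) :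
    LN Ω' :=
  (LN.Lp (Measure.count : Measure ℤ) p hp (LN.Lp (volume : Measure ℝ) q hq ρ)).comap
    (hW α) (hW_meas α) (fun z => φ z.2) (hφ.comp measurable_snd) (hW_ne_top α)

theorem HL.herzLN {ρ : LN Ω} (h : HL ρ) (α p q : ℝ) (hp : 1 < p) (hq : 1 < q) (φ : ℝ × Ω → Ω')
    (hφ : Measurable φ) : HL (ρ.herz α p q hp hq φ hφ) :=
  HL.comap _ _ _ _ _ (HL.Lp _ hp (HL.Lp _ hq h))

theorem LN.herz_N (ρ : LN Ω) (α p q : ℝ) (hp : 1 < p) (hq : 1 < q) (φ : ℝ × Ω → Ω')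
    (hφ : Measurable φ) (f : Ω' → ℝ≥0∞) : (ρ.herz α p q hp hq φ hφ).N f =
      herzNorm1 α (ENNReal.ofReal p) (ENNReal.ofReal q) (fun t => ρ.N (fun ω => f (φ (t, ω)))) := by
  have hq0 : 0 < q := by linarith
  rw [herzNorm1_eq hp hq]
  simp only [LN.herz, LN.comap, LN.Lp, lintegral_count]
  congr 2
  ext k
  congr 1
  rw [← AN_smul hq _ _ (w2_ne_top _)]
  unfold AN
  congr 1
  rw [← lintegral_indicator (herzRing_meas k)]
  congr 1
  ext t
  by_cases ht : t ∈ herzRing k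
  · simp only [hW, ht, Set.indicator_of_mem]
    rw [ρ.smul _ _ (w2_ne_top _)]
  · simp [hW, ht, ρ.N_zero, hq0]
end

theorem measurable_snoc (n : ℕ) :
    Measurable fun a : ℝ × (Fin n → ℝ) => (Fin.snoc a.2 a.1 : Fin (n + 1) → ℝ) := by
  refine measurable_pi_iff.2 fun i => ?_
  refine Fin.lastCases ?_ (fun j => ?_) i
  · simpa using measurable_fst
  · simp only [Fin.snoc_castSucc]
    exact (measurable_pi_apply j).comp measurable_snd

/-- iterated maximal operator -/
def TT : (n : ℕ) → ((Fin n → ℝ) → ℝ≥0∞) → (Fin n → ℝ) → ℝ≥0∞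
  | 0, g => g
  | n + 1, g => fun x => TT n (fun z => MD (fun s => g (Fin.snoc z s)) (x (Fin.last n))) (Fin.init x)

theorem mixed_main (u : ℝ) (hu : 1 < u) : ∀ (n : ℕ) (p q α : Fin n → ℝ)
    (_ : ∀ i, 1 < p i) (_ : ∀ i, 1 < q i)
    (_ : ∀ i, -(1 / q i) < α i ∧ α i < 1 - 1 / q i),
    ∃ ρ : LN ((Fin n → ℝ) × ℤ), HL ρ ∧
      (∀ f : (Fin n → ℝ) × ℤ → ℝ≥0∞, ρ.N f = mixedHerzNormE n α (fun i => ENNReal.ofReal (p i))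
        (fun i => ENNReal.ofReal (q i)) (fun x => (∑' j : ℤ, f (x, j) ^ u) ^ (1 / u))) ∧
      ∃ C : ℝ≥0∞, C ≠ ∞ ∧ ∀ f : (Fin n → ℝ) × ℤ → ℝ≥0∞, Measurable f →
        ρ.N (fun ω => TT n (fun z => f (z, ω.2)) ω.1) ≤ C * ρ.N f := by
  intro n
  induction n with
  | zero =>
    intro p q α _ _ _
    refine ⟨(LN.Lp (Measure.count : Measure ℤ) u hu LN.unit).comap (fun _ => 1) measurable_const
      (fun z => (fun i => i.elim0, z.1)) (measurable_const.prodMk measurable_fst) (by simp),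
      HL.comap _ _ _ _ _ (HL.Lp _ hu HL.unit), fun f => ?_, 1, by simp, fun f _ => ?_⟩
    · simp only [LN.comap, LN.Lp, LN.unit, lintegral_count, one_mul, mixedHerzNormE]
    · simp only [TT, one_mul]
      exact le_rfl
  | succ n ih =>
    intro p q α hp hq hα
    obtain ⟨ρ, hρ, hN, C, hC, hb⟩ := ih (Fin.init p) (Fin.init q) (Fin.init α)
      (fun i => hp i.castSucc) (fun i => hq i.castSucc) (fun i => hα i.castSucc)
    have hpl := hp (Fin.last n)
    have hql := hq (Fin.last n)
    have hφ : Measurable fun a : ℝ × ((Fin n → ℝ) × ℤ) =>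
        ((Fin.snoc a.2.1 a.1 : Fin (n + 1) → ℝ), a.2.2) := by
      refine Measurable.prodMk ?_ (measurable_snd.comp measurable_snd)
      exact (measurable_snoc n).comp (measurable_fst.prodMk (measurable_fst.comp measurable_snd))
    obtain ⟨D, hD, hd⟩ := hρ.herz hpl hql (hα (Fin.last n)).1 (hα (Fin.last n)).2
    refine ⟨ρ.herz (α (Fin.last n)) _ _ hpl hql _ hφ, hρ.herzLN _ _ _ _ _ _ _, fun f => ?_,
      C * D, ENNReal.mul_ne_top hC hD, fun f hf => ?_⟩
    · rw [LN.herz_N]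
      simp only [hN]
      rfl
    · rw [LN.herz_N, LN.herz_N]
      simp only [TT, Fin.snoc_last, Fin.init_snoc]
      have hfm : Measurable (Function.uncurry fun (s : ℝ) (ω : (Fin n → ℝ) × ℤ) =>
          f ((Fin.snoc ω.1 s : Fin (n + 1) → ℝ), ω.2)) := hf.comp hφ
      have h1 := hd _ hfm
      rw [mul_assoc]
      refine le_trans ?_ (mul_le_mul_right h1 C)
      rw [← herzNorm1_smul hpl hql C hC]
      refine herzNorm1_mono hpl hql fun t => ?_
      exact hb (fun ω => MD (fun s => f ((Fin.snoc ω.1 s : Fin (n + 1) → ℝ), ω.2)) t)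
        ((measurable_MD _ hfm).of_uncurry_left (x := t))

end

section

def cub (n : ℕ) (x : Fin n → ℝ) (r : ℝ) : Set (Fin n → ℝ) :=
  Set.pi Set.univ fun i => Set.Ioo (x i - r) (x i + r)

theorem cub_vol (n : ℕ) (x : Fin n → ℝ) (r : ℝ) :
    volume (cub n x r) = ENNReal.ofReal (2 * r) ^ n := by
  unfold cub
  rw [Real.volume_pi_Ioo]
  have : ∀ i, x i + r - (x i - r) = 2 * r := fun i => by ring
  simp [this]

theorem cub_fubini (n : ℕ) (x : Fin (n + 1) → ℝ) (r : ℝ) (g : (Fin (n + 1) → ℝ) → ℝ≥0∞)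
    (hg : Measurable g) : ∫⁻ y in cub (n + 1) x r, g y =
      ∫⁻ z in cub n (Fin.init x) r, ∫⁻ s in Set.Ioo (x (Fin.last n) - r) (x (Fin.last n) + r),
        g (Fin.snoc z s) := by
  have hmp := (volume_preserving_piFinSuccAbove (fun _ : Fin (n + 1) => ℝ) (Fin.last n)).symm
  rw [← hmp.setLIntegral_comp_preimage_emb (MeasurableEquiv.measurableEmbedding _)]
  have e1 : ∀ a : ℝ × (Fin n → ℝ), (MeasurableEquiv.piFinSuccAbove (fun _ : Fin (n + 1) => ℝ)
      (Fin.last n)).symm a = (Fin.snoc a.2 a.1 : Fin (n + 1) → ℝ) := fun a => by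
    exact Fin.insertNth_last' _ _
  have e2 : (MeasurableEquiv.piFinSuccAbove (fun _ : Fin (n + 1) => ℝ)
      (Fin.last n)).symm ⁻¹' (cub (n + 1) x r) =
      Set.Ioo (x (Fin.last n) - r) (x (Fin.last n) + r) ×ˢ cub n (Fin.init x) r := by
    ext a
    rw [Set.mem_preimage, e1]
    simp only [cub, Set.mem_pi, Set.mem_univ, true_implies, Set.mem_prod, Fin.forall_fin_succ',
      Fin.snoc_castSucc, Fin.snoc_last, Fin.init]
    tauto
  rw [e2]
  have e3 : ∀ a : ℝ × (Fin n → ℝ), g ((MeasurableEquiv.piFinSuccAbove (fun _ : Fin (n + 1) => ℝ)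
      (Fin.last n)).symm a) = g (Fin.snoc a.2 a.1 : Fin (n + 1) → ℝ) := fun a => by rw [e1]
  have e4 := lintegral_congr (μ := volume.restrict
    (Set.Ioo (x (Fin.last n) - r) (x (Fin.last n) + r) ×ˢ cub n (Fin.init x) r)) e3
  refine e4.trans ?_
  rw [Measure.volume_eq_prod, ← Measure.prod_restrict, lintegral_prod_symm']
  exact hg.comp (measurable_snoc n)

theorem cub_avg_le (n : ℕ) : ∀ (g : (Fin n → ℝ) → ℝ≥0∞) (_ : Measurable g) (x : Fin n → ℝ) (r : ℝ)
    (_ : 0 < r), (ENNReal.ofReal (2 * r))⁻¹ ^ n * ∫⁻ y in cub n x r, g y ≤ TT n g x := by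
  induction n with
  | zero =>
    intro g _ x r _
    have h1 : cub 0 x r = {x} := by
      ext y
      simp [cub, Subsingleton.elim y x]
    have h2 : (volume : Measure (Fin 0 → ℝ)) {x} = 1 := by
      rw [← h1, cub_vol]; simp
    rw [h1]
    simp [TT, h2]
  | succ n ih =>
    intro g hg x r hr
    rw [cub_fubini n x r g hg]
    have hm : Measurable (Function.uncurry fun (s : ℝ) (z : Fin n → ℝ) =>
      g (Fin.snoc z s : Fin (n + 1) → ℝ)) := hg.comp (measurable_snoc n)
    have h1 := ih (fun z => MD (fun s => g (Fin.snoc z s)) (x (Fin.last n)))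
      ((measurable_MD _ hm).of_uncurry_left (x := x (Fin.last n))) (Fin.init x) r hr
    refine le_trans ?_ h1
    have hne : (ENNReal.ofReal (2 * r))⁻¹ ≠ ∞ :=
      ENNReal.inv_ne_top.2 (ENNReal.ofReal_pos.2 (by positivity)).ne'
    rw [pow_succ, mul_assoc, ← lintegral_const_mul' _ _ hne]
    gcongr with z
    exact avg_le_MD _ _ _ hr

theorem centeredMax_le (n : ℕ) (g : (Fin n → ℝ) → ℝ≥0∞) (hg : Measurable g) (x : Fin n → ℝ) :
    centeredMax n g x ≤ ((n:ℝ≥0∞) + 1) ^ n * TT n g x := by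
  refine iSup₂_le fun r hr => ?_
  have hn : (0:ℝ) < n + 1 := by positivity
  have s1 : cub n x (r / (n + 1)) ⊆ eucBall n x r := by
    intro y hy
    simp only [cub, Set.mem_pi, Set.mem_univ, true_implies, Set.mem_Ioo] at hy
    have h1 : ∀ i, (y i - x i) ^ 2 ≤ (r / (n + 1)) ^ 2 := fun i => by
      refine sq_le_sq' ?_ ?_ <;> linarith [(hy i).1, (hy i).2]
    have h2 : ∑ i, (y i - x i) ^ 2 ≤ n * (r / (n + 1)) ^ 2 := by
      refine (Finset.sum_le_sum fun i _ => h1 i).trans (le_of_eq ?_)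
      simp
    refine lt_of_le_of_lt h2 ?_
    rw [div_pow, mul_div_assoc', div_lt_iff₀ (by positivity), mul_comm]
    have : (n:ℝ) < (n + 1) ^ 2 := by nlinarith
    have hr2 : 0 < r ^ 2 := by positivity
    exact mul_lt_mul_of_pos_left this hr2
  have s2 : eucBall n x r ⊆ cub n x r := by
    intro y hy i _
    have h1 : (y i - x i) ^ 2 < r ^ 2 :=
      lt_of_le_of_lt (Finset.single_le_sum (f := fun i => (y i - x i) ^ 2)
        (fun i _ => sq_nonneg _) (Finset.mem_univ i)) hy
    have := abs_lt.1 (abs_lt_of_sq_lt_sq h1 hr.le)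
    constructor <;> linarith [this.1, this.2]
  have hv : (volume (eucBall n x r))⁻¹ ≤ ((n:ℝ≥0∞) + 1) ^ n * (ENNReal.ofReal (2 * r))⁻¹ ^ n := by
    refine (ENNReal.inv_le_inv.2 (measure_mono s1)).trans (le_of_eq ?_)
    rw [cub_vol, ← mul_pow, ENNReal.inv_pow]
    congr 1
    have e : 2 * (r / (n + 1)) = (2 * r) / (n + 1) := by ring
    rw [e, ENNReal.ofReal_div_of_pos hn, ENNReal.inv_div (by simp) (by
      left; exact (ENNReal.ofReal_pos.2 hn).ne'), ENNReal.div_eq_inv_mul, mul_comm]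
    congr 1
    rw [ENNReal.ofReal_add (by positivity) (by norm_num)]
    simp
  calc _ ≤ (((n:ℝ≥0∞) + 1) ^ n * (ENNReal.ofReal (2 * r))⁻¹ ^ n) * ∫⁻ y in cub n x r, g y := by
        gcongr
    _ = ((n:ℝ≥0∞) + 1) ^ n * ((ENNReal.ofReal (2 * r))⁻¹ ^ n * ∫⁻ y in cub n x r, g y) := mul_assoc _ _ _
    _ ≤ _ := mul_le_mul_right (cub_avg_le n g hg x r hr) _

end

/-- Fefferman–Stein vector-valued maximal inequality on mixed-norm
Herz spaces. -/
theorem mixedHerz_FS_HL (n : ℕ) (p q α : Fin n → ℝ)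
    (hp : ∀ i, 1 < p i) (hq : ∀ i, 1 < q i)
    (hα : ∀ i, -(1 / q i) < α i ∧ α i < 1 - 1 / q i)
    (u : ℝ) (hu : 1 < u) :
    ∃ C : ℝ≥0∞, 0 < C ∧ C ≠ ∞ ∧
      ∀ f : ℤ → (Fin n → ℝ) → ℂ, (∀ j, Measurable (f j)) →
        mixedHerzNormE n α (fun i => ENNReal.ofReal (p i)) (fun i => ENNReal.ofReal (q i))
            (fun x => (∑' j : ℤ, centeredMax n (fun y => (‖f j y‖₊ : ℝ≥0∞)) x ^ u) ^ (1 / u)) ≤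
          C * mixedHerzNormE n α (fun i => ENNReal.ofReal (p i)) (fun i => ENNReal.ofReal (q i))
            (fun x => (∑' j : ℤ, (‖f j x‖₊ : ℝ≥0∞) ^ u) ^ (1 / u)) := by
  obtain ⟨ρ, _, hN, C, hC, hb⟩ := mixed_main u hu n p q α hp hq hα
  have hK : ((n:ℝ≥0∞) + 1) ^ n ≠ ∞ := ENNReal.pow_ne_top (by simp)
  refine ⟨((n:ℝ≥0∞) + 1) ^ n * C + 1, by positivity,
    ENNReal.add_ne_top.2 ⟨ENNReal.mul_ne_top hK hC, by simp⟩, fun f hf => ?_⟩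
  have hm : ∀ j, Measurable fun y => (‖f j y‖₊ : ℝ≥0∞) := fun j => (hf j).enorm
  have hF : Measurable fun z : (Fin n → ℝ) × ℤ => (‖f z.2 z.1‖₊ : ℝ≥0∞) :=
    measurable_from_prod_countable_left hm
  have h1 := hN (fun z => centeredMax n (fun y => (‖f z.2 y‖₊ : ℝ≥0∞)) z.1)
  have h2 := hN (fun z => (‖f z.2 z.1‖₊ : ℝ≥0∞))
  rw [← h1, ← h2]
  have h3 := hb _ hF
  have h4 : ρ.N (fun z => centeredMax n (fun y => (‖f z.2 y‖₊ : ℝ≥0∞)) z.1) ≤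
      ρ.N (fun z => ((n:ℝ≥0∞) + 1) ^ n * TT n (fun y => (‖f z.2 y‖₊ : ℝ≥0∞)) z.1) :=
    ρ.mono fun z => centeredMax_le n _ (hm z.2) z.1
  rw [ρ.smul _ _ hK] at h4
  refine h4.trans ((mul_le_mul_right h3 _).trans ?_)
  rw [← mul_assoc]
  exact mul_le_mul_left le_self_add _
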